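/- arXiv:1003.5388 — 5 statements merged into one kernel-verified Lean document; each statement's English description precedes it below -/
import Mathlib

section
/- Let f : ℕ → ℤ be a completely multiplicative function taking values in {-1, 1}, and let c ∈ [-1, 0) be a real number. If the series ∑_p (c - f(p))/p over primes p converges, then ∑_{n ≤ x} μ(n) f(n)/n → ∞ as x → ∞, where μ is the Möbius function. -/
/-!
Put `g = 1 - f`. Since the Dirichlet convolution of `μ * f` with `1` is `n ↦ ∏_{p ∣ n} g p`, and
`⌊N / n⌋` differs from `N / n` by at most `1`, the sum `∑_{n ≤ N} μ n * f n / n` is, up to a bounded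
error, the mean over `n ≤ N` of `∏_{p ∣ n} g p`. So it is enough that this mean tends to infinity
when `0 ≤ g ≤ M` and `g` has mean value `a` over the primes, with `a > 1` and `M < 2 * a`; here
`a = 1 - c` and `M = 2`.

For `w` a small fixed power of `N`, consider the `n = m * k` with `m` squarefree and composed of
primes `p ≤ w`, and `k` free of such primes. For `m ≤ w ^ A`, with `A` a large constant, already the
products `k = p * q` of two large primes contribute at least a constant times `(N / m) / log N`.
Indeed, cut the primes into blocks `(b ^ i, b ^ (i + 1)]`: by Mertens' theorem the block sums of
`g p / p` exceed half of their largest possible value on average, so they cannot be small on one of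
each pair of blocks with the same product. By Markov's inequality for `∑_{p ∣ m} log p`, the
restriction `m ≤ w ^ A` costs at most half of `∏_{p ≤ w} (1 + g p / p)`. Hence the mean is at least
a constant times this product divided by `log w`, and the product grows like `(log w) ^ a`.
-/

open Finset Filter Topology
open ArithmeticFunction (prodPrimeFactors vonMangoldt moebius)

section Mertens

theorem sum_Ioc_vonMangoldt_mul_div_eq_log_factorial (N : ℕ) :
    ∑ n ∈ Ioc 0 N, vonMangoldt n * ((N / n : ℕ) : ℝ) = Real.log N.factorial := by
  rw [← ArithmeticFunction.sum_Ioc_mul_zeta_eq_sum, ArithmeticFunction.vonMangoldt_mul_zeta]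
  induction N with
  | zero => simp
  | succ n ih =>
    rw [sum_Ioc_succ_top n.zero_le, ih, Nat.factorial_succ, Nat.cast_mul,
      Real.log_mul (by positivity) (by positivity), ArithmeticFunction.log_apply, add_comm]

theorem sum_Ioc_vonMangoldt_div_le (N : ℕ) :
    ∑ n ∈ Ioc 0 N, vonMangoldt n / n ≤ Real.log N + (Real.log 4 + 4) := by
  rcases N.eq_zero_or_pos with rfl | hN
  · simpa using add_nonneg (Real.log_nonneg (by norm_num : (1 : ℝ) ≤ 4)) zero_le_four
  have hN' : (0 : ℝ) < N := by exact_mod_cast hN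
  have hfact : Real.log N.factorial ≤ N * Real.log N := by
    rw [← Real.log_pow]
    exact Real.log_le_log (by positivity) (by exact_mod_cast Nat.factorial_le_pow N)
  have hpsi := Chebyshev.psi_le_const_mul_self hN'.le
  refine le_of_mul_le_mul_left ?_ hN'
  calc (N : ℝ) * ∑ n ∈ Ioc 0 N, vonMangoldt n / n
      ≤ ∑ n ∈ Ioc 0 N, (vonMangoldt n * ((N / n : ℕ) : ℝ) + vonMangoldt n) := by
        rw [mul_sum]
        refine sum_le_sum fun n _ ↦ ?_
        have hdiv : (N : ℝ) / n ≤ ((N / n : ℕ) : ℝ) + 1 := by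
          rw [← Nat.floor_div_eq_div (K := ℝ)]
          exact (Nat.lt_floor_add_one _).le
        calc (N : ℝ) * (vonMangoldt n / n)
            = vonMangoldt n * (N / n) := by ring
          _ ≤ vonMangoldt n * (((N / n : ℕ) : ℝ) + 1) :=
            mul_le_mul_of_nonneg_left hdiv ArithmeticFunction.vonMangoldt_nonneg
          _ = _ := by ring
    _ = Real.log N.factorial + Chebyshev.psi N := by
        rw [sum_add_distrib, sum_Ioc_vonMangoldt_mul_div_eq_log_factorial, Chebyshev.psi,
          Nat.floor_natCast]
    _ ≤ N * (Real.log N + (Real.log 4 + 4)) := by linarith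

theorem sum_primesLE_log_div_le (N : ℕ) :
    ∑ p ∈ N.primesLE, Real.log p / p ≤ Real.log N + (Real.log 4 + 4) := by
  refine le_trans ?_ (sum_Ioc_vonMangoldt_div_le N)
  calc ∑ p ∈ N.primesLE, Real.log p / p
      = ∑ p ∈ N.primesLE, vonMangoldt p / p :=
        sum_congr rfl fun p hp ↦ by
          rw [ArithmeticFunction.vonMangoldt_apply_prime (Nat.prime_of_mem_primesLE hp)]
    _ ≤ _ := by
        refine sum_le_sum_of_subset_of_nonneg ?_ fun n _ _ ↦
          div_nonneg ArithmeticFunction.vonMangoldt_nonneg n.cast_nonneg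
        rw [Nat.primesLE_eq_filter_Ioc_zero]
        exact filter_subset _ _

theorem summable_log_div_mul_sub_one :
    Summable fun n : ℕ ↦ Real.log n / (n * (n - 1)) := by
  have hmaj : Summable fun n : ℕ ↦ 4 * (1 / (n : ℝ) ^ (3 / 2 : ℝ)) :=
    (Real.summable_one_div_nat_rpow.mpr (by norm_num)).mul_left 4
  refine hmaj.of_norm_bounded_eventually_nat ?_
  filter_upwards [eventually_ge_atTop 2] with n hn
  have hn2 : (2 : ℝ) ≤ n := by exact_mod_cast hn
  have hn0 : (0 : ℝ) < n := by linarith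
  have hlog : Real.log n ≤ 2 * (n : ℝ) ^ (1 / 2 : ℝ) := by
    linarith [Real.log_le_rpow_div hn0.le (ε := 1 / 2) (by norm_num)]
  have hpow : (n : ℝ) ^ (1 / 2 : ℝ) * (n : ℝ) ^ (3 / 2 : ℝ) = n ^ 2 := by
    rw [← Real.rpow_add hn0]
    norm_num
  rw [Real.norm_of_nonneg (div_nonneg (Real.log_natCast_nonneg n) (by nlinarith)),
    div_le_iff₀ (by nlinarith), mul_one_div, div_mul_eq_mul_div, le_div_iff₀ (by positivity)]
  calc Real.log n * (n : ℝ) ^ (3 / 2 : ℝ)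
      ≤ 2 * (n : ℝ) ^ (1 / 2 : ℝ) * (n : ℝ) ^ (3 / 2 : ℝ) := by gcongr
    _ = 2 * n ^ 2 := by rw [mul_assoc, hpow]
    _ ≤ 4 * (n * (n - 1)) := by nlinarith

theorem log_factorial_le_mul_sum_primesLE (N : ℕ) :
    Real.log N.factorial ≤ N * ∑ p ∈ N.primesLE, Real.log p / (p - 1) := by
  rw [Real.log_nat_eq_sum_factorization, Finsupp.sum, mul_sum]
  have hsubset : N.factorial.factorization.support ⊆ N.primesLE := fun p hp ↦ by
    rw [Nat.support_factorization, Nat.mem_primeFactors] at hp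
    exact Nat.mem_primesLE.mpr ⟨hp.1.dvd_factorial.mp hp.2.1, hp.1⟩
  refine (sum_le_sum_of_subset_of_nonneg hsubset fun p _ _ ↦
    mul_nonneg (Nat.cast_nonneg _) (Real.log_natCast_nonneg p)).trans (sum_le_sum fun p hp ↦ ?_)
  have hprime := Nat.prime_of_mem_primesLE hp
  have hval : (N.factorial.factorization p : ℝ) ≤ N / (p - 1) := by
    rw [← Nat.cast_pred hprime.pos]
    exact (Nat.cast_le.mpr (Nat.factorization_factorial_le_div_pred hprime N)).trans
      Nat.cast_div_le
  calc (N.factorial.factorization p : ℝ) * Real.log p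
      ≤ N / (p - 1) * Real.log p := mul_le_mul_of_nonneg_right hval (Real.log_natCast_nonneg p)
    _ = N * (Real.log p / (p - 1)) := by ring

theorem exists_log_sub_le_sum_primesLE_log_div :
    ∃ C : ℝ, ∀ N : ℕ, Real.log N - C ≤ ∑ p ∈ N.primesLE, Real.log p / p := by
  set C : ℝ := ∑' n : ℕ, Real.log n / (n * (n - 1)) with hC
  have hterm : ∀ n : ℕ, 0 ≤ Real.log n / (n * ((n : ℝ) - 1)) := fun n ↦ by
    rcases n.eq_zero_or_pos with rfl | hn
    · simp
    have : (1 : ℝ) ≤ n := by exact_mod_cast hn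
    exact div_nonneg (Real.log_natCast_nonneg n) (by nlinarith)
  refine ⟨C + 1, fun N ↦ ?_⟩
  rcases N.eq_zero_or_pos with rfl | hN
  · have : 0 - (C + 1) ≤ 0 := by linarith [hC ▸ tsum_nonneg hterm]
    simpa using this
  have hN' : (0 : ℝ) < N := by exact_mod_cast hN
  have hsplit : ∑ p ∈ N.primesLE, Real.log p / ((p : ℝ) - 1) =
      ∑ p ∈ N.primesLE, Real.log p / p + ∑ p ∈ N.primesLE, Real.log p / (p * ((p : ℝ) - 1)) := by
    rw [← sum_add_distrib]
    refine sum_congr rfl fun p hp ↦ ?_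
    have hp2 : (2 : ℝ) ≤ p := by exact_mod_cast Nat.two_le_of_mem_primesLE hp
    have : (p : ℝ) - 1 ≠ 0 := by linarith
    field_simp
    ring
  have htail : ∑ p ∈ N.primesLE, Real.log p / (p * ((p : ℝ) - 1)) ≤ C :=
    summable_log_div_mul_sub_one.sum_le_tsum _ fun n _ ↦ hterm n
  have hstirling := Stirling.le_log_factorial_stirling hN.ne'
  have hlog2pi : 0 ≤ Real.log (2 * Real.pi) := Real.log_nonneg (by nlinarith [Real.pi_gt_three])
  have hupper := log_factorial_le_mul_sum_primesLE N
  rw [hsplit] at hupper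
  refine le_of_mul_le_mul_left ?_ hN'
  nlinarith [Real.log_natCast_nonneg N]

theorem exists_abs_sum_primesLE_log_div_sub_log_le :
    ∃ C : ℝ, 0 < C ∧ ∀ N : ℕ, |∑ p ∈ N.primesLE, Real.log p / p - Real.log N| ≤ C := by
  obtain ⟨C, hC⟩ := exists_log_sub_le_sum_primesLE_log_div
  have hlog4 : 0 ≤ Real.log 4 := Real.log_nonneg (by norm_num)
  refine ⟨|C| + (Real.log 4 + 4), by positivity, fun N ↦ abs_le.mpr ⟨?_, ?_⟩⟩
  · linarith [hC N, le_abs_self C]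
  · linarith [sum_primesLE_log_div_le N, abs_nonneg C]

end Mertens

section EulerProduct

theorem log_add_one_le_prod_primesLE (N : ℕ) :
    Real.log (N + 1) ≤ ∏ p ∈ N.primesLE, (1 - (p : ℝ)⁻¹)⁻¹ := by
  let inv : ℕ →* ℝ :=
    { toFun := fun n ↦ (n : ℝ)⁻¹
      map_one' := by simp
      map_mul' := fun a b ↦ by rw [Nat.cast_mul, mul_inv] }
  have heuler := (EulerProduct.summable_and_hasSum_smoothNumbers_prod_primesBelow_geometric
    (f := inv) (fun {p} hp ↦ by
      rw [show inv p = (p : ℝ)⁻¹ from rfl, Real.norm_of_nonneg (by positivity)]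
      exact inv_lt_one_of_one_lt₀ (by exact_mod_cast hp.one_lt)) (N + 1)).2
  have hsmooth : ∀ n ∈ Icc 1 N, n ∈ (N + 1).smoothNumbers := fun n hn ↦ by
    rw [mem_Icc] at hn
    exact Nat.mem_smoothNumbers_of_lt (by lia) (by lia)
  have hharmonic := log_add_one_le_harmonic N
  rw [harmonic_eq_sum_Icc] at hharmonic
  push_cast at hharmonic
  calc Real.log (N + 1) ≤ ∑ n ∈ Icc 1 N, (n : ℝ)⁻¹ := hharmonic
    _ = ∑ n ∈ (Icc 1 N).subtype (· ∈ (N + 1).smoothNumbers), inv n :=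
        (sum_subtype_of_mem (fun n ↦ inv n) hsmooth).symm
    _ ≤ ∏ p ∈ N.primesLE, (1 - inv p)⁻¹ :=
        sum_le_hasSum _ (fun n _ ↦ inv_nonneg.mpr n.1.cast_nonneg) heuler

theorem exists_log_le_exp_sum_primesLE_one_div_add :
    ∃ K : ℝ, ∀ N : ℕ, Real.log N ≤ Real.exp (∑ p ∈ N.primesLE, 1 / (p : ℝ) + K) := by
  have hsummable : Summable fun n : ℕ ↦ 2 * (1 / (n : ℝ) ^ 2) :=
    (Real.summable_one_div_nat_pow.mpr one_lt_two).mul_left 2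
  refine ⟨∑' n : ℕ, 2 * (1 / (n : ℝ) ^ 2), fun N ↦ ?_⟩
  have hfactor : ∀ p ∈ N.primesLE,
      (1 - (p : ℝ)⁻¹)⁻¹ ≤ Real.exp (1 / p + 2 * (1 / (p : ℝ) ^ 2)) := fun p hp ↦ by
    have hp2 : (2 : ℝ) ≤ p := by exact_mod_cast Nat.two_le_of_mem_primesLE hp
    have hp1 : (0 : ℝ) < p - 1 := by linarith
    calc (1 - (p : ℝ)⁻¹)⁻¹ = 1 / (p - 1) + 1 := by field_simp; ring
      _ ≤ 1 / p + 2 * (1 / (p : ℝ) ^ 2) + 1 := by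
        gcongr
        rw [← sub_nonneg, show 1 / (p : ℝ) + 2 * (1 / (p : ℝ) ^ 2) - 1 / (p - 1) =
          (p - 2) / (p ^ 2 * (p - 1)) by field_simp; ring]
        exact div_nonneg (by linarith) (by positivity)
      _ ≤ _ := Real.add_one_le_exp _
  calc Real.log N ≤ Real.log (N + 1) := by
        rcases N.eq_zero_or_pos with rfl | hN
        · simp
        · exact Real.log_le_log (by exact_mod_cast hN) (by linarith)
    _ ≤ ∏ p ∈ N.primesLE, (1 - (p : ℝ)⁻¹)⁻¹ := log_add_one_le_prod_primesLE N
    _ ≤ ∏ p ∈ N.primesLE, Real.exp (1 / p + 2 * (1 / (p : ℝ) ^ 2)) :=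
        prod_le_prod (fun p hp ↦ inv_nonneg.mpr (sub_nonneg.mpr (inv_le_one_of_one_le₀
          (by exact_mod_cast (Nat.prime_of_mem_primesLE hp).one_le)))) hfactor
    _ = Real.exp (∑ p ∈ N.primesLE, 1 / (p : ℝ) + ∑ p ∈ N.primesLE, 2 * (1 / (p : ℝ) ^ 2)) := by
        rw [← Real.exp_sum, sum_add_distrib]
    _ ≤ _ := by
        gcongr
        exact hsummable.sum_le_tsum _ fun n _ ↦ by positivity

theorem tendsto_sum_primesLE_one_div_atTop :
    Tendsto (fun N : ℕ ↦ ∑ p ∈ N.primesLE, 1 / (p : ℝ)) atTop atTop := by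
  obtain ⟨K, hK⟩ := exists_log_le_exp_sum_primesLE_one_div_add
  have hexp : Tendsto (fun N : ℕ ↦ Real.exp (∑ p ∈ N.primesLE, 1 / (p : ℝ) + K)) atTop atTop :=
    tendsto_atTop_mono hK (Real.tendsto_log_atTop.comp tendsto_natCast_atTop_atTop)
  simpa using tendsto_atTop_add_const_right atTop (-K) (Real.tendsto_exp_comp_atTop.mp hexp)

theorem exp_sub_sq_div_two_le_one_add {x : ℝ} (hx : 0 ≤ x) : Real.exp (x - x ^ 2 / 2) ≤ 1 + x := by
  rw [← Real.le_log_iff_exp_le (by linarith)]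
  refine le_trans ?_ (Real.le_log_one_add_of_nonneg hx)
  rw [le_div_iff₀ (by linarith)]
  nlinarith [pow_nonneg hx 3]

/-- `g` has mean value `a` over the primes, in the strong sense that the series
`∑_p (g p - a) / p`, with its terms taken in increasing order of `p`, converges. -/
def HasPrimeMean (g : ℕ → ℝ) (a : ℝ) : Prop :=
  ∃ L : ℝ, Tendsto (fun N : ℕ ↦ ∑ p ∈ N.primesLE, (g p - a) / p) atTop (𝓝 L)

theorem exp_sum_sub_sum_sq_div_two_le_prod_one_add {ι : Type*} (s : Finset ι) {x : ι → ℝ}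
    (hx : ∀ i ∈ s, 0 ≤ x i) :
    Real.exp (∑ i ∈ s, x i - (∑ i ∈ s, x i ^ 2) / 2) ≤ ∏ i ∈ s, (1 + x i) := by
  rw [sum_div, ← sum_sub_distrib, Real.exp_sum]
  exact prod_le_prod (fun _ _ ↦ (Real.exp_pos _).le) fun i hi ↦
    exp_sub_sq_div_two_le_one_add (hx i hi)

theorem HasPrimeMean.tendsto_prod_div_log {g : ℕ → ℝ} {a M : ℝ} (hmean : HasPrimeMean g a)
    (hg : ∀ p, p.Prime → g p ∈ Set.Icc 0 M) (ha : 1 < a) :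
    Tendsto (fun N : ℕ ↦ (∏ p ∈ N.primesLE, (1 + g p / p)) / Real.log N) atTop atTop := by
  obtain ⟨L, hL⟩ := hmean
  obtain ⟨K, hK⟩ := exists_log_le_exp_sum_primesLE_one_div_add
  have hsummable : Summable fun n : ℕ ↦ M ^ 2 * (1 / (n : ℝ) ^ 2) :=
    (Real.summable_one_div_nat_pow.mpr one_lt_two).mul_left _
  have hlower : Tendsto (fun N : ℕ ↦ Real.exp ((a - 1) * ∑ p ∈ N.primesLE, 1 / (p : ℝ) +
      (∑ p ∈ N.primesLE, (g p - a) / p + (-(∑' n : ℕ, M ^ 2 * (1 / (n : ℝ) ^ 2)) / 2 - K))))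
      atTop atTop :=
    Real.tendsto_exp_comp_atTop.mpr <|
      (tendsto_sum_primesLE_one_div_atTop.const_mul_atTop (by linarith)).atTop_add
        (hL.add_const _)
  refine tendsto_atTop_mono' _ ?_ hlower
  filter_upwards [eventually_ge_atTop 2] with N hN
  have hlog : 0 < Real.log N := Real.log_pos (by exact_mod_cast hN)
  have hnonneg : ∀ p ∈ N.primesLE, 0 ≤ g p / p := fun p hp ↦
    div_nonneg (hg p (Nat.prime_of_mem_primesLE hp)).1 p.cast_nonneg
  have hsq : ∑ p ∈ N.primesLE, (g p / p) ^ 2 ≤ ∑' n : ℕ, M ^ 2 * (1 / (n : ℝ) ^ 2) := by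
    refine le_trans (sum_le_sum fun p hp ↦ ?_)
      (hsummable.sum_le_tsum N.primesLE fun n _ ↦ by positivity)
    obtain ⟨hg0, hgM⟩ := hg p (Nat.prime_of_mem_primesLE hp)
    rw [div_pow, mul_one_div]
    gcongr
  have hsum : ∑ p ∈ N.primesLE, g p / p =
      a * ∑ p ∈ N.primesLE, 1 / (p : ℝ) + ∑ p ∈ N.primesLE, (g p - a) / p := by
    rw [mul_sum, ← sum_add_distrib]
    exact sum_congr rfl fun p _ ↦ by ring
  rw [le_div_iff₀ hlog]
  refine le_trans ?_ (exp_sum_sub_sum_sq_div_two_le_prod_one_add N.primesLE hnonneg)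
  refine (mul_le_mul_of_nonneg_left (hK N) (Real.exp_pos _).le).trans ?_
  rw [← Real.exp_add, Real.exp_le_exp]
  linarith

end EulerProduct

section Windows

/-- The primes `p` with `x < p ≤ y`. -/
def primesIoc (x y : ℕ) : Finset ℕ := {p ∈ Ioc x y | p.Prime}

theorem mem_primesIoc {x y p : ℕ} : p ∈ primesIoc x y ↔ (x < p ∧ p ≤ y) ∧ p.Prime := by
  rw [primesIoc, mem_filter, mem_Ioc]

theorem sum_primesIoc_eq_sub (F : ℕ → ℝ) {x y : ℕ} (hxy : x ≤ y) :
    ∑ p ∈ primesIoc x y, F p = ∑ p ∈ y.primesLE, F p - ∑ p ∈ x.primesLE, F p := by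
  rw [eq_sub_iff_add_eq', primesIoc, Nat.primesLE_eq_filter_Ioc_zero,
    Nat.primesLE_eq_filter_Ioc_zero]
  simp only [sum_filter]
  exact sum_Ioc_consecutive _ x.zero_le hxy

theorem exists_abs_sum_primesIoc_log_div_sub_le :
    ∃ C : ℝ, 0 < C ∧ ∀ x y : ℕ, x ≤ y →
      |∑ p ∈ primesIoc x y, Real.log p / p - (Real.log y - Real.log x)| ≤ C := by
  obtain ⟨C, hC, hmertens⟩ := exists_abs_sum_primesLE_log_div_sub_log_le
  refine ⟨C + C, add_pos hC hC, fun x y hxy ↦ ?_⟩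
  rw [sum_primesIoc_eq_sub _ hxy, sub_sub_sub_comm]
  exact (abs_sub _ _).trans (add_le_add (hmertens y) (hmertens x))

theorem sum_primesIoc_log_div_le_mul_log (x y : ℕ) :
    ∑ p ∈ primesIoc x y, Real.log p / p ≤ (∑ p ∈ primesIoc x y, 1 / (p : ℝ)) * Real.log y := by
  rw [sum_mul]
  refine sum_le_sum fun p hp ↦ ?_
  obtain ⟨⟨-, hpy⟩, hprime⟩ := mem_primesIoc.mp hp
  have hlog : Real.log p ≤ Real.log y :=
    Real.log_le_log (by exact_mod_cast hprime.pos) (by exact_mod_cast hpy)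
  rw [one_div_mul_eq_div]
  gcongr

variable {g : ℕ → ℝ} {a M : ℝ}

theorem sum_primesIoc_div_mul_log_le (hg : ∀ p, p.Prime → g p ∈ Set.Icc 0 M) (x y : ℕ) :
    (∑ p ∈ primesIoc x y, g p / p) * Real.log x ≤ M * ∑ p ∈ primesIoc x y, Real.log p / p := by
  rw [sum_mul, mul_sum]
  refine sum_le_sum fun p hp ↦ ?_
  obtain ⟨⟨hxp, -⟩, hprime⟩ := mem_primesIoc.mp hp
  obtain ⟨hg0, hgM⟩ := hg p hprime
  have hlog : Real.log x ≤ Real.log p := by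
    rcases x.eq_zero_or_pos with rfl | hx
    · simpa using Real.log_natCast_nonneg p
    · exact Real.log_le_log (by exact_mod_cast hx) (by exact_mod_cast hxp.le)
  rw [div_mul_eq_mul_div, mul_div_assoc']
  exact div_le_div_of_nonneg_right
    (mul_le_mul hgM hlog (Real.log_natCast_nonneg x) (hg0.trans hgM)) p.cast_nonneg

theorem HasPrimeMean.tendsto_sum_primesIoc_zero (hmean : HasPrimeMean g a) {x y : ℕ → ℕ}
    (hx : Tendsto x atTop atTop) (hxy : ∀ t, x t ≤ y t) :
    Tendsto (fun t ↦ ∑ p ∈ primesIoc (x t) (y t), (g p - a) / p) atTop (𝓝 0) := by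
  obtain ⟨L, hL⟩ := hmean
  have hy : Tendsto y atTop atTop := tendsto_atTop_mono hxy hx
  simpa only [sum_primesIoc_eq_sub _ (hxy _), sub_self, Function.comp_def] using
    (hL.comp hy).sub (hL.comp hx)

end Windows

section Blocks

theorem mul_two_mul_sum_sub_le_sum_mul_reflect {a : ℕ → ℝ} {V : ℝ} {n : ℕ}
    (ha : ∀ k < n, a k ≤ V) :
    V * (2 * ∑ k ∈ range n, a k - n * V) ≤ ∑ k ∈ range n, a k * a (n - 1 - k) := by
  have hreflect : ∑ k ∈ range n, a (n - 1 - k) = ∑ k ∈ range n, a k := sum_range_reflect a n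
  calc V * (2 * ∑ k ∈ range n, a k - n * V)
      = ∑ k ∈ range n, V * (a k + a (n - 1 - k) - V) := by
        rw [← mul_sum, sum_sub_distrib, sum_add_distrib, hreflect, sum_const, card_range,
          nsmul_eq_mul, two_mul]
    _ ≤ ∑ k ∈ range n, a k * a (n - 1 - k) := sum_le_sum fun k hk ↦ by
        have hk' := mem_range.mp hk
        nlinarith [mul_nonneg (sub_nonneg.mpr (ha k hk'))
          (sub_nonneg.mpr (ha (n - 1 - k) (by lia)))]

/-- The weight `∑ g p / p` of the block of primes `b ^ i < p ≤ b ^ (i + 1)`. -/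
noncomputable def primeBlockSum (g : ℕ → ℝ) (b i : ℕ) : ℝ :=
  ∑ p ∈ primesIoc (b ^ i) (b ^ (i + 1)), g p / p

theorem sum_range_primeBlockSum (g : ℕ → ℝ) {b : ℕ} (hb : 0 < b) (i n : ℕ) :
    ∑ k ∈ range n, primeBlockSum g b (i + k) = ∑ p ∈ primesIoc (b ^ i) (b ^ (i + n)), g p / p := by
  have hblock (k : ℕ) : primeBlockSum g b (i + k) =
      ∑ p ∈ (b ^ (i + (k + 1))).primesLE, g p / p - ∑ p ∈ (b ^ (i + k)).primesLE, g p / p :=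
    sum_primesIoc_eq_sub _ (Nat.pow_le_pow_right hb (by lia))
  simp only [hblock]
  rw [sum_primesIoc_eq_sub _ (Nat.pow_le_pow_right hb (by lia)),
    sum_range_sub fun k ↦ ∑ p ∈ (b ^ (i + k)).primesLE, g p / p, add_zero]

variable {g : ℕ → ℝ} {a M : ℝ}

theorem primeBlockSum_le (hg : ∀ p, p.Prime → g p ∈ Set.Icc 0 M) {b : ℕ} (hb : 1 < b)
    {C : ℝ} (hC : ∀ x y : ℕ, x ≤ y →
      |∑ p ∈ primesIoc x y, Real.log p / p - (Real.log y - Real.log x)| ≤ C)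
    {s i : ℕ} (hs : 0 < s) (hsi : s ≤ i) :
    primeBlockSum g b i ≤ M * (1 + C / Real.log b) / s := by
  have hlog : 0 < Real.log b := Real.log_pos (by exact_mod_cast hb)
  have hs' : (0 : ℝ) < s := by exact_mod_cast hs
  have hM : 0 ≤ M := (hg 2 Nat.prime_two).1.trans (hg 2 Nat.prime_two).2
  have hnonneg : 0 ≤ primeBlockSum g b i := sum_nonneg fun p hp ↦
    div_nonneg (hg p (mem_primesIoc.mp hp).2).1 p.cast_nonneg
  have hwindow := (abs_le.mp (hC _ _ (Nat.pow_le_pow_right hb.le i.le_succ))).2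
  have hupper := sum_primesIoc_div_mul_log_le hg (b ^ i) (b ^ (i + 1))
  simp only [Nat.cast_pow, Real.log_pow, Nat.cast_add_one] at hwindow hupper
  rw [le_div_iff₀ hs']
  refine le_of_mul_le_mul_right ?_ hlog
  calc primeBlockSum g b i * s * Real.log b
      ≤ primeBlockSum g b i * (i * Real.log b) := by
        rw [mul_assoc]
        gcongr
    _ ≤ M * (Real.log b + C) := by
        refine hupper.trans (mul_le_mul_of_nonneg_left ?_ hM)
        linarith
    _ = M * (1 + C / Real.log b) * Real.log b := by field_simp

theorem one_sub_div_le_sum_primesIoc_one_div {b : ℕ} (hb : 1 < b) {C : ℝ} (hC : ∀ x y : ℕ, x ≤ y →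
      |∑ p ∈ primesIoc x y, Real.log p / p - (Real.log y - Real.log x)| ≤ C)
    (D : ℕ) {t : ℕ} (ht : 0 < t) :
    (1 - C / Real.log b / t) / (D + 1) ≤
      ∑ p ∈ primesIoc (b ^ (D * t)) (b ^ (D * t + t)), 1 / (p : ℝ) := by
  have hlog : 0 < Real.log b := Real.log_pos (by exact_mod_cast hb)
  have ht' : (0 : ℝ) < t := by exact_mod_cast ht
  have hwindow := (abs_le.mp (hC _ _ (Nat.pow_le_pow_right hb.le (Nat.le_add_right (D * t) t)))).1
  have hlower := sum_primesIoc_log_div_le_mul_log (b ^ (D * t)) (b ^ (D * t + t))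
  simp only [Nat.cast_pow, Real.log_pow, Nat.cast_add, Nat.cast_mul] at hwindow hlower
  rw [div_le_iff₀ (by positivity)]
  refine le_of_mul_le_mul_right ?_ (mul_pos ht' hlog)
  calc (1 - C / Real.log b / t) * (t * Real.log b) = t * Real.log b - C := by field_simp
    _ ≤ _ := by linarith

theorem add_sum_primesIoc_sub_div_le_sum_primeBlockSum (ha : 0 ≤ a) {b : ℕ} (hb : 1 < b) {C : ℝ}
    (hC : ∀ x y : ℕ, x ≤ y →
      |∑ p ∈ primesIoc x y, Real.log p / p - (Real.log y - Real.log x)| ≤ C)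
    (D : ℕ) {t : ℕ} (ht : 0 < t) :
    a * ((1 - C / Real.log b / t) / (D + 1)) +
        ∑ p ∈ primesIoc (b ^ (D * t)) (b ^ (D * t + t)), (g p - a) / p ≤
      ∑ k ∈ range t, primeBlockSum g b (D * t + k) := by
  have hsplit : ∑ p ∈ primesIoc (b ^ (D * t)) (b ^ (D * t + t)), g p / p =
      a * ∑ p ∈ primesIoc (b ^ (D * t)) (b ^ (D * t + t)), 1 / (p : ℝ) +
        ∑ p ∈ primesIoc (b ^ (D * t)) (b ^ (D * t + t)), (g p - a) / p := by
    rw [mul_sum, ← sum_add_distrib]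
    exact sum_congr rfl fun p _ ↦ by ring
  rw [sum_range_primeBlockSum g (one_pos.trans hb), hsplit]
  gcongr
  exact one_sub_div_le_sum_primesIoc_one_div hb hC D ht

theorem exists_mul_one_add_div_log_lt (C : ℝ) {M A : ℝ} (hMA : M < A) :
    ∃ n : ℕ, 1 < n ∧ M * (1 + C / Real.log n) / n < A / (n + 1) := by
  have hlog : Tendsto (fun n : ℕ ↦ C / Real.log n) atTop (𝓝 0) :=
    tendsto_const_nhds.div_atTop (Real.tendsto_log_atTop.comp tendsto_natCast_atTop_atTop)
  have hlim : Tendsto (fun n : ℕ ↦ M * (1 + C / Real.log n) * (1 + 1 / (n : ℝ))) atTop (𝓝 M) := by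
    simpa using ((hlog.const_add 1).const_mul M).mul
      (tendsto_one_div_atTop_nhds_zero_nat.const_add 1)
  obtain ⟨n, hlt, hn⟩ := ((hlim.eventually_lt_const hMA).and (eventually_gt_atTop 1)).exists
  have : (0 : ℝ) < n := by exact_mod_cast one_pos.trans hn
  refine ⟨n, hn, ?_⟩
  rw [lt_div_iff₀ (by positivity)]
  calc M * (1 + C / Real.log n) / n * (n + 1) = M * (1 + C / Real.log n) * (1 + 1 / (n : ℝ)) := by
        field_simp
    _ < A := hlt

theorem HasPrimeMean.exists_le_sum_primeBlockSum_mul_reflect (hmean : HasPrimeMean g a)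
    (hg : ∀ p, p.Prime → g p ∈ Set.Icc 0 M) (hMa : M < 2 * a) :
    ∃ b D : ℕ, 1 < b ∧ 0 < D ∧ ∃ c : ℝ, 0 < c ∧ ∀ᶠ t : ℕ in atTop,
      c / t ≤ ∑ k ∈ range t,
        primeBlockSum g b (D * t + k) * primeBlockSum g b (D * t + (t - 1 - k)) := by
  obtain ⟨C, hC0, hC⟩ := exists_abs_sum_primesIoc_log_div_sub_le
  obtain ⟨K, hMK, hKa⟩ := exists_between hMa
  have hK : 0 < K := ((hg 2 Nat.prime_two).1.trans (hg 2 Nat.prime_two).2).trans_lt hMK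
  have hgK (p : ℕ) (hp : p.Prime) : g p ∈ Set.Icc 0 K := Set.Icc_subset_Icc_right hMK.le (hg p hp)
  obtain ⟨n, hn, hlt⟩ := exists_mul_one_add_div_log_lt C hKa
  have : (0 : ℝ) < n := by exact_mod_cast one_pos.trans hn
  have hlog : 0 < Real.log n := Real.log_pos (by exact_mod_cast hn)
  set v : ℝ := K * (1 + C / Real.log n) / n with hv
  have hv0 : 0 < v := by positivity
  set δ : ℕ → ℝ := fun t ↦ ∑ p ∈ primesIoc (n ^ (n * t)) (n ^ (n * t + t)), (g p - a) / p
  set u : ℕ → ℝ := fun t ↦ 2 * (a * ((1 - C / Real.log n / t) / (n + 1)) + δ t) - v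
  have hδ : Tendsto δ atTop (𝓝 0) := hmean.tendsto_sum_primesIoc_zero
    ((tendsto_pow_atTop_atTop_of_one_lt hn).comp (tendsto_id.const_mul_atTop' (one_pos.trans hn)))
    fun t ↦ Nat.pow_le_pow_right hn.le (Nat.le_add_right _ _)
  have hu : Tendsto u atTop (𝓝 (2 * a / (n + 1) - v)) := by
    have hratio := ((tendsto_const_div_atTop_nhds_zero_nat (C / Real.log n)).const_sub 1).div_const
      ((n : ℝ) + 1)
    convert (((hratio.const_mul a).add hδ).const_mul 2).sub_const v using 2
    ring
  obtain ⟨c, hc0, hc⟩ := exists_between (sub_pos.mpr hlt)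
  refine ⟨n, n, hn, one_pos.trans hn, v * c, mul_pos hv0 hc0, ?_⟩
  filter_upwards [hu.eventually_const_lt hc, eventually_gt_atTop 0] with t hct ht
  have ht' : (0 : ℝ) < t := by exact_mod_cast ht
  have hblock : ∀ k < t, primeBlockSum g n (n * t + k) ≤ v / t := fun k _ ↦ by
    rw [hv, div_div, ← Nat.cast_mul]
    exact primeBlockSum_le hgK hn hC (Nat.mul_pos (one_pos.trans hn) ht) (Nat.le_add_right _ _)
  have htotal := add_sum_primesIoc_sub_div_le_sum_primeBlockSum (g := g)
    (by linarith : 0 ≤ a) hn hC n ht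
  calc v * c / t = v / t * c := by ring
    _ ≤ v / t * (2 * ∑ k ∈ range t, primeBlockSum g n (n * t + k) - t * (v / t)) := by
        rw [mul_div_cancel₀ v ht'.ne']
        gcongr
        linarith
    _ ≤ _ := mul_two_mul_sum_sub_le_sum_mul_reflect hblock

end Blocks

section PrimePairs

/-- The pairs `(p, q)` of primes with `p * q ≤ y`, both larger than `y ^ (1 / 4)`. -/
def largePrimePairs (y : ℕ) : Finset (ℕ × ℕ) :=
  {x ∈ y.primesLE ×ˢ y.primesLE | y < x.1 ^ 4 ∧ y < x.2 ^ 4 ∧ x.1 * x.2 ≤ y}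

/-- The pairs of primes from two blocks `(b ^ i, b ^ (i + 1)]` and `(b ^ j, b ^ (j + 1)]` with
`i, j ≥ D * t` and `i + j = 2 * D * t + t - 1`; their products are of the same order of
magnitude. -/
def primeBlockPairs (b D t : ℕ) : Finset (ℕ × ℕ) :=
  (range t).biUnion fun k ↦ primesIoc (b ^ (D * t + k)) (b ^ (D * t + k + 1)) ×ˢ
    primesIoc (b ^ (D * t + (t - 1 - k))) (b ^ (D * t + (t - 1 - k) + 1))

variable {b D t y : ℕ} {x : ℕ × ℕ}

theorem pow_lt_mul_of_mem_primeBlockPairs (hx : x ∈ primeBlockPairs b D t) :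
    b ^ ((2 * D + 1) * t - 1) < x.1 * x.2 := by
  obtain ⟨k, hk, hmem⟩ := mem_biUnion.mp hx
  obtain ⟨hp, hq⟩ := mem_product.mp hmem
  have hk := mem_range.mp hk
  have hexp : (2 * D + 1) * t - 1 = (D * t + k) + (D * t + (t - 1 - k)) := by
    rw [add_mul, one_mul, mul_assoc]
    lia
  rw [hexp, pow_add]
  exact Nat.mul_lt_mul'' (mem_primesIoc.mp hp).1.1 (mem_primesIoc.mp hq).1.1

theorem mul_le_pow_of_mem_primeBlockPairs (hx : x ∈ primeBlockPairs b D t) :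
    x.1 * x.2 ≤ b ^ ((2 * D + 1) * t + 1) := by
  obtain ⟨k, hk, hmem⟩ := mem_biUnion.mp hx
  obtain ⟨hp, hq⟩ := mem_product.mp hmem
  have hk := mem_range.mp hk
  have hexp : (2 * D + 1) * t + 1 = (D * t + k + 1) + (D * t + (t - 1 - k) + 1) := by
    rw [add_mul, one_mul, mul_assoc]
    lia
  rw [hexp, pow_add]
  exact Nat.mul_le_mul (mem_primesIoc.mp hp).1.2 (mem_primesIoc.mp hq).1.2

theorem mem_primesIoc_of_mem_primeBlockPairs (hb : 0 < b) (hx : x ∈ primeBlockPairs b D t) :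
    (x.1.Prime ∧ b ^ (D * t) < x.1) ∧ x.2.Prime ∧ b ^ (D * t) < x.2 := by
  obtain ⟨k, -, hmem⟩ := mem_biUnion.mp hx
  obtain ⟨hp, hq⟩ := mem_product.mp hmem
  rw [mem_primesIoc] at hp hq
  exact ⟨⟨hp.2, (Nat.pow_le_pow_right hb (Nat.le_add_right _ _)).trans_lt hp.1.1⟩,
    hq.2, (Nat.pow_le_pow_right hb (Nat.le_add_right _ _)).trans_lt hq.1.1⟩

theorem primeBlockPairs_subset_largePrimePairs (hb : 0 < b)
    (hlower : b ^ ((2 * D + 1) * t + 1) ≤ y)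
    (hupper : y ≤ b ^ (4 * (D * t))) :
    primeBlockPairs b D t ⊆ largePrimePairs y := by
  intro x hx
  obtain ⟨⟨hp, hp_gt⟩, hq, hq_gt⟩ := mem_primesIoc_of_mem_primeBlockPairs hb hx
  have hmul : x.1 * x.2 ≤ y := (mul_le_pow_of_mem_primeBlockPairs hx).trans hlower
  have hlarge (p : ℕ) (h : b ^ (D * t) < p) : y < p ^ 4 := by
    refine hupper.trans_lt ?_
    rw [mul_comm 4, pow_mul]
    exact Nat.pow_lt_pow_left h four_ne_zero
  rw [largePrimePairs, mem_filter, mem_product, Nat.mem_primesLE, Nat.mem_primesLE]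
  exact ⟨⟨⟨(Nat.le_mul_of_pos_right _ hq.pos).trans hmul, hp⟩,
    (Nat.le_mul_of_pos_left _ hp.pos).trans hmul, hq⟩, hlarge _ hp_gt, hlarge _ hq_gt, hmul⟩

theorem sum_primeBlockSum_mul_reflect (g : ℕ → ℝ) (hb : 0 < b) (D t : ℕ) :
    ∑ k ∈ range t, primeBlockSum g b (D * t + k) * primeBlockSum g b (D * t + (t - 1 - k)) =
      ∑ x ∈ primeBlockPairs b D t, g x.1 * g x.2 / (x.1 * x.2) := by
  rw [primeBlockPairs, sum_biUnion]
  · refine sum_congr rfl fun k _ ↦ ?_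
    rw [primeBlockSum, primeBlockSum, sum_mul_sum, sum_product]
    exact sum_congr rfl fun p _ ↦ sum_congr rfl fun q _ ↦ div_mul_div_comm _ _ _ _
  · intro k _ l _ hkl
    refine disjoint_left.mpr fun x hxk hxl ↦ ?_
    have hk := (mem_primesIoc.mp (mem_product.mp hxk).1).1
    have hl := (mem_primesIoc.mp (mem_product.mp hxl).1).1
    rcases hkl.lt_or_gt with h | h
    · exact (hk.2.trans (Nat.pow_le_pow_right hb (by lia))).not_gt hl.1
    · exact (hl.2.trans (Nat.pow_le_pow_right hb (by lia))).not_gt hk.1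

variable {g : ℕ → ℝ} {a M : ℝ}

theorem sum_primeBlockSum_mul_reflect_le (hg : ∀ p, p.Prime → 0 ≤ g p) (hb : 1 < b) (hD : 0 < D)
    (ht : 6 ≤ t) (hlower : b ^ ((2 * D + 1) * (t + 1)) ≤ y)
    (hupper : y < b ^ ((2 * D + 1) * (t + 2))) :
    ∑ k ∈ range t, primeBlockSum g b (D * t + k) * primeBlockSum g b (D * t + (t - 1 - k)) ≤
      b ^ (4 * D + 3) / y * ∑ x ∈ largePrimePairs y, g x.1 * g x.2 := by
  have hy : 0 < y := (Nat.pow_pos (one_pos.trans hb)).trans_le hlower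
  have hsubset : primeBlockPairs b D t ⊆ largePrimePairs y :=
    primeBlockPairs_subset_largePrimePairs (one_pos.trans hb)
      ((Nat.pow_le_pow_right (one_pos.trans hb) (by nlinarith)).trans hlower)
      (hupper.le.trans (Nat.pow_le_pow_right (one_pos.trans hb) (by nlinarith)))
  rw [sum_primeBlockSum_mul_reflect g (one_pos.trans hb), mul_sum]
  calc ∑ x ∈ primeBlockPairs b D t, g x.1 * g x.2 / (x.1 * x.2)
      ≤ ∑ x ∈ primeBlockPairs b D t, b ^ (4 * D + 3) / y * (g x.1 * g x.2) := by
        refine sum_le_sum fun x hx ↦ ?_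
        obtain ⟨⟨hp, -⟩, hq, -⟩ := mem_primesIoc_of_mem_primeBlockPairs (one_pos.trans hb) hx
        have hbound : y ≤ b ^ (4 * D + 3) * (x.1 * x.2) := by
          refine hupper.le.trans (le_trans ?_
            (Nat.mul_le_mul_left _ (pow_lt_mul_of_mem_primeBlockPairs hx).le))
          rw [← pow_add]
          refine Nat.pow_le_pow_right (one_pos.trans hb) ?_
          have : 0 < (2 * D + 1) * t := by positivity
          rw [mul_add]
          lia
        have hp0 : (0 : ℝ) < x.1 := by exact_mod_cast hp.pos
        have hq0 : (0 : ℝ) < x.2 := by exact_mod_cast hq.pos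
        rw [div_eq_mul_one_div, mul_comm]
        refine mul_le_mul_of_nonneg_right ?_ (mul_nonneg (hg _ hp) (hg _ hq))
        rw [div_le_div_iff₀ (by positivity) (by positivity), one_mul]
        exact_mod_cast hbound
    _ ≤ _ := sum_le_sum_of_subset_of_nonneg hsubset fun x hx _ ↦ by
        have hprimes := mem_product.mp (mem_filter.mp hx).1
        have := hg _ (Nat.prime_of_mem_primesLE hprimes.1)
        have := hg _ (Nat.prime_of_mem_primesLE hprimes.2)
        positivity

theorem eventually_exists_pow_le_and_lt_pow {B : ℕ} (hB : 1 < B) (T : ℕ) :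
    ∀ᶠ y : ℕ in atTop, ∃ t ≥ T, B ^ (t + 1) ≤ y ∧ y < B ^ (t + 2) := by
  filter_upwards [eventually_ge_atTop (B ^ (T + 1))] with y hy
  have hy0 : y ≠ 0 := ((Nat.pow_pos (one_pos.trans hB)).trans_le hy).ne'
  have hlog : T + 1 ≤ Nat.log B y := Nat.le_log_of_pow_le hB hy
  refine ⟨Nat.log B y - 1, by lia, ?_, ?_⟩
  · rw [Nat.sub_add_cancel (by lia)]
    exact Nat.pow_log_le_self B hy0
  · rw [show Nat.log B y - 1 + 2 = Nat.log B y + 1 by lia]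
    exact Nat.lt_pow_succ_log_self hB y

theorem HasPrimeMean.exists_le_sum_largePrimePairs (hmean : HasPrimeMean g a)
    (hg : ∀ p, p.Prime → g p ∈ Set.Icc 0 M) (hMa : M < 2 * a) :
    ∃ c : ℝ, 0 < c ∧ ∀ᶠ y : ℕ in atTop,
      c * (y / Real.log y) ≤ ∑ x ∈ largePrimePairs y, g x.1 * g x.2 := by
  obtain ⟨b, D, hb, hD, c, hc, hblocks⟩ :=
    hmean.exists_le_sum_primeBlockSum_mul_reflect hg hMa
  obtain ⟨T, hT⟩ := eventually_atTop.mp hblocks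
  have hb0 : 0 < b := one_pos.trans hb
  have hlogb : 0 < Real.log b := Real.log_pos (by exact_mod_cast hb)
  refine ⟨c * Real.log b / b ^ (4 * D + 3), by positivity, ?_⟩
  filter_upwards [eventually_exists_pow_le_and_lt_pow
    (B := b ^ (2 * D + 1)) (Nat.one_lt_pow (by lia) hb) (T + 6),
    eventually_gt_atTop 0] with y ⟨t, htT, hlower, hupper⟩ hy0
  rw [← pow_mul] at hlower hupper
  have ht0 : (0 : ℝ) < t := by exact_mod_cast (by lia : 0 < t)
  have hlogy : t * Real.log b ≤ Real.log y := by
    rw [← Real.log_pow]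
    refine Real.log_le_log (by positivity) ?_
    exact_mod_cast (Nat.pow_le_pow_right hb0 (by nlinarith)).trans hlower
  have hpairs := (hT t (by lia)).trans (sum_primeBlockSum_mul_reflect_le
    (fun p hp ↦ (hg p hp).1) hb hD (by lia) hlower hupper)
  have hlogy0 : 0 < Real.log y := (mul_pos ht0 hlogb).trans_le hlogy
  calc c * Real.log b / b ^ (4 * D + 3) * (y / Real.log y)
      ≤ y / b ^ (4 * D + 3) * (c / t) := by
        rw [div_mul_div_comm, div_mul_div_comm, div_le_div_iff₀ (by positivity) (by positivity)]
        calc c * Real.log b * y * (b ^ (4 * D + 3) * t)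
            = c * y * b ^ (4 * D + 3) * (t * Real.log b) := by ring
          _ ≤ c * y * b ^ (4 * D + 3) * Real.log y := by gcongr
          _ = _ := by ring
    _ ≤ y / b ^ (4 * D + 3) * (b ^ (4 * D + 3) / y * ∑ x ∈ largePrimePairs y, g x.1 * g x.2) := by
        gcongr
    _ = _ := by field_simp

end PrimePairs

section RoughNumbers

/-- The positive integers `k ≤ y` all of whose prime factors are larger than `w`. -/
def roughUpTo (w y : ℕ) : Finset ℕ := {k ∈ Ioc 0 y | ∀ p ∈ k.primeFactors, w < p}

theorem mem_roughUpTo {w y k : ℕ} :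
    k ∈ roughUpTo w y ↔ (0 < k ∧ k ≤ y) ∧ ∀ p ∈ k.primeFactors, w < p := by
  rw [roughUpTo, mem_filter, mem_Ioc]

theorem prodPrimeFactors_nonneg {g : ℕ → ℝ} (hg : ∀ p, p.Prime → 0 ≤ g p) (n : ℕ) :
    0 ≤ prodPrimeFactors g n := by
  rcases eq_or_ne n 0 with rfl | hn
  · simp
  · rw [ArithmeticFunction.prodPrimeFactors_apply hn]
    exact prod_nonneg fun p hp ↦ hg p (Nat.prime_of_mem_primeFactors hp)

theorem mul_le_mul_prodPrimeFactors_mul {g : ℕ → ℝ} {M : ℝ}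
    (hg : ∀ p, p.Prime → g p ∈ Set.Icc 0 M) {p q : ℕ} (hp : p.Prime) (hq : q.Prime) :
    g p * g q ≤ (M + 1) * prodPrimeFactors g (p * q) := by
  obtain ⟨hp0, hpM⟩ := hg p hp
  have hq0 := (hg q hq).1
  rw [ArithmeticFunction.prodPrimeFactors_apply (mul_ne_zero hp.ne_zero hq.ne_zero),
    Nat.primeFactors_mul hp.ne_zero hq.ne_zero, hp.primeFactors, hq.primeFactors]
  rcases eq_or_ne p q with rfl | hpq
  · rw [union_self, prod_singleton]
    nlinarith
  · rw [← insert_eq, prod_pair hpq]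
    nlinarith [mul_nonneg hp0 hq0]

theorem card_filter_mul_eq_le_two {s : Finset (ℕ × ℕ)} (hs : ∀ x ∈ s, x.1.Prime ∧ x.2.Prime)
    (n : ℕ) : #{x ∈ s | x.1 * x.2 = n} ≤ 2 := by
  rcases ({x ∈ s | x.1 * x.2 = n} : Finset (ℕ × ℕ)).eq_empty_or_nonempty with hempty | ⟨x, hx⟩
  · rw [hempty, card_empty]
    exact zero_le_two
  refine (card_le_card (t := {x, x.swap}) fun z hz ↦ ?_).trans card_le_two
  obtain ⟨hxs, rfl⟩ := mem_filter.mp hx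
  obtain ⟨hzs, hzx⟩ := mem_filter.mp hz
  obtain ⟨hp, hq⟩ := hs x hxs
  obtain ⟨hp', -⟩ := hs z hzs
  rw [mem_insert, mem_singleton]
  rcases hp'.dvd_mul.mp (Dvd.intro _ hzx) with h | h
  · have hfst := (Nat.prime_dvd_prime_iff_eq hp' hp).mp h
    rw [hfst] at hzx
    exact Or.inl (Prod.ext hfst (Nat.eq_of_mul_eq_mul_left hp.pos hzx))
  · have hfst := (Nat.prime_dvd_prime_iff_eq hp' hq).mp h
    rw [hfst, mul_comm] at hzx
    exact Or.inr (Prod.ext hfst (Nat.eq_of_mul_eq_mul_right hq.pos hzx))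

theorem mul_mem_roughUpTo_of_mem_largePrimePairs {w y : ℕ} (hwy : w ^ 4 ≤ y) {x : ℕ × ℕ}
    (hx : x ∈ largePrimePairs y) : x.1 * x.2 ∈ roughUpTo w y := by
  obtain ⟨hmem, hp_gt, hq_gt, hmul⟩ := mem_filter.mp hx
  have hp := Nat.prime_of_mem_primesLE (mem_product.mp hmem).1
  have hq := Nat.prime_of_mem_primesLE (mem_product.mp hmem).2
  refine mem_roughUpTo.mpr ⟨⟨Nat.mul_pos hp.pos hq.pos, hmul⟩, fun r hr ↦ ?_⟩
  rw [Nat.primeFactors_mul hp.ne_zero hq.ne_zero, hp.primeFactors, hq.primeFactors, mem_union,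
    mem_singleton, mem_singleton] at hr
  rcases hr with rfl | rfl
  · exact lt_of_pow_lt_pow_left' 4 (hwy.trans_lt hp_gt)
  · exact lt_of_pow_lt_pow_left' 4 (hwy.trans_lt hq_gt)

theorem sum_largePrimePairs_le_sum_roughUpTo {g : ℕ → ℝ} {M : ℝ}
    (hg : ∀ p, p.Prime → g p ∈ Set.Icc 0 M) {w y : ℕ} (hwy : w ^ 4 ≤ y) :
    ∑ x ∈ largePrimePairs y, g x.1 * g x.2 ≤
      2 * (M + 1) * ∑ k ∈ roughUpTo w y, prodPrimeFactors g k := by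
  have hM : 0 ≤ M := (hg 2 Nat.prime_two).1.trans (hg 2 Nat.prime_two).2
  have hprime : ∀ x ∈ largePrimePairs y, x.1.Prime ∧ x.2.Prime := fun x hx ↦
    (mem_product.mp (mem_filter.mp hx).1).imp Nat.prime_of_mem_primesLE Nat.prime_of_mem_primesLE
  rw [← sum_fiberwise_of_maps_to fun x hx ↦ mul_mem_roughUpTo_of_mem_largePrimePairs hwy hx,
    mul_sum]
  refine sum_le_sum fun k _ ↦ ?_
  have hterm : ∀ x ∈ ({x ∈ largePrimePairs y | x.1 * x.2 = k} : Finset (ℕ × ℕ)),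
      g x.1 * g x.2 ≤ (M + 1) * prodPrimeFactors g k := fun x hx ↦ by
    obtain ⟨hmem, rfl⟩ := mem_filter.mp hx
    exact mul_le_mul_prodPrimeFactors_mul hg (hprime x hmem).1 (hprime x hmem).2
  have hnonneg : 0 ≤ (M + 1) * prodPrimeFactors g k :=
    mul_nonneg (by linarith) (prodPrimeFactors_nonneg (fun p hp ↦ (hg p hp).1) k)
  calc ∑ x ∈ largePrimePairs y with x.1 * x.2 = k, g x.1 * g x.2
      ≤ #{x ∈ largePrimePairs y | x.1 * x.2 = k} • ((M + 1) * prodPrimeFactors g k) :=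
        sum_le_card_nsmul _ _ _ hterm
    _ ≤ 2 • ((M + 1) * prodPrimeFactors g k) :=
        nsmul_le_nsmul_left hnonneg (card_filter_mul_eq_le_two hprime k)
    _ = 2 * (M + 1) * prodPrimeFactors g k := by rw [two_nsmul]; ring

theorem HasPrimeMean.exists_le_sum_roughUpTo {g : ℕ → ℝ} {a M : ℝ} (hmean : HasPrimeMean g a)
    (hg : ∀ p, p.Prime → g p ∈ Set.Icc 0 M) (hMa : M < 2 * a) :
    ∃ c : ℝ, 0 < c ∧ ∀ᶠ y : ℕ in atTop, ∀ w : ℕ, w ^ 4 ≤ y →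
      c * (y / Real.log y) ≤ ∑ k ∈ roughUpTo w y, prodPrimeFactors g k := by
  obtain ⟨c, hc, hpairs⟩ := hmean.exists_le_sum_largePrimePairs hg hMa
  have hM : 0 ≤ M := (hg 2 Nat.prime_two).1.trans (hg 2 Nat.prime_two).2
  refine ⟨c / (2 * (M + 1)), by positivity, ?_⟩
  filter_upwards [hpairs] with y hy w hwy
  rw [div_mul_eq_mul_div, div_le_iff₀' (by positivity)]
  exact hy.trans (sum_largePrimePairs_le_sum_roughUpTo hg hwy)

theorem filter_le_primeFactors_prod_mul {w y k : ℕ} {T : Finset ℕ} (hT : T ⊆ w.primesLE)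
    (hk : k ∈ roughUpTo w y) : {p ∈ ((∏ p ∈ T, p) * k).primeFactors | p ≤ w} = T := by
  have hprime : ∀ p ∈ T, p.Prime := fun p hp ↦ Nat.prime_of_mem_primesLE (hT hp)
  obtain ⟨⟨hk0, -⟩, hrough⟩ := mem_roughUpTo.mp hk
  rw [Nat.primeFactors_mul (prod_ne_zero_iff.mpr fun p hp ↦ (hprime p hp).ne_zero) hk0.ne',
    Nat.primeFactors_prod hprime, filter_union,
    filter_true_of_mem fun p hp ↦ Nat.le_of_mem_primesLE (hT hp),
    filter_false_of_mem fun p hp ↦ (hrough p hp).not_ge, union_empty]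

theorem prodPrimeFactors_prod_mul (g : ℕ → ℝ) {w y k : ℕ} {T : Finset ℕ} (hT : T ⊆ w.primesLE)
    (hk : k ∈ roughUpTo w y) :
    prodPrimeFactors g ((∏ p ∈ T, p) * k) = (∏ p ∈ T, g p) * prodPrimeFactors g k := by
  have hprime : ∀ p ∈ T, p.Prime := fun p hp ↦ Nat.prime_of_mem_primesLE (hT hp)
  obtain ⟨⟨hk0, -⟩, hrough⟩ := mem_roughUpTo.mp hk
  have hprod : ∏ p ∈ T, p ≠ 0 := prod_ne_zero_iff.mpr fun p hp ↦ (hprime p hp).ne_zero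
  have hdisjoint : Disjoint T k.primeFactors := disjoint_left.mpr fun p hp hpk ↦
    (hrough p hpk).not_ge (Nat.le_of_mem_primesLE (hT hp))
  rw [ArithmeticFunction.prodPrimeFactors_apply (mul_ne_zero hprod hk0.ne'),
    ArithmeticFunction.prodPrimeFactors_apply hk0.ne', Nat.primeFactors_mul hprod hk0.ne',
    Nat.primeFactors_prod hprime, prod_union hdisjoint]

theorem sum_powerset_primesLE_mul_sum_roughUpTo_le {g : ℕ → ℝ} (hg : ∀ p, p.Prime → 0 ≤ g p)
    (w N : ℕ) :
    ∑ T ∈ w.primesLE.powerset,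
        (∏ p ∈ T, g p) * ∑ k ∈ roughUpTo w (N / ∏ p ∈ T, p), prodPrimeFactors g k ≤
      ∑ n ∈ Ioc 0 N, prodPrimeFactors g n := by
  set pairs : Finset (Σ _ : Finset ℕ, ℕ) :=
    w.primesLE.powerset.sigma fun T ↦ roughUpTo w (N / ∏ p ∈ T, p) with hpairs
  let mulProd : (Σ _ : Finset ℕ, ℕ) → ℕ := fun x ↦ (∏ p ∈ x.1, p) * x.2
  have hmem : ∀ x ∈ pairs, x.1 ⊆ w.primesLE ∧ x.2 ∈ roughUpTo w (N / ∏ p ∈ x.1, p) :=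
    fun x hx ↦ (mem_sigma.mp hx).imp_left mem_powerset.mp
  have hpos : ∀ x ∈ pairs, 0 < ∏ p ∈ x.1, p := fun x hx ↦
    prod_pos fun p hp ↦ (Nat.prime_of_mem_primesLE ((hmem x hx).1 hp)).pos
  have hinj : Set.InjOn mulProd pairs := by
    rintro ⟨T, k⟩ hx ⟨T', k'⟩ hx' heq
    obtain rfl : T = T' :=
      calc T = {p ∈ (mulProd ⟨T, k⟩).primeFactors | p ≤ w} :=
            (filter_le_primeFactors_prod_mul (hmem _ hx).1 (hmem _ hx).2).symm
        _ = {p ∈ (mulProd ⟨T', k'⟩).primeFactors | p ≤ w} := by rw [heq]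
        _ = T' := filter_le_primeFactors_prod_mul (hmem _ hx').1 (hmem _ hx').2
    exact congrArg _ (Nat.eq_of_mul_eq_mul_left (hpos _ hx) heq)
  have himage : pairs.image mulProd ⊆ Ioc 0 N := by
    refine image_subset_iff.mpr fun x hx ↦ mem_Ioc.mpr ?_
    obtain ⟨⟨hk0, hk⟩, -⟩ := mem_roughUpTo.mp (hmem x hx).2
    exact ⟨Nat.mul_pos (hpos x hx) hk0, (Nat.mul_le_mul_left _ hk).trans (Nat.mul_div_le _ _)⟩
  calc ∑ T ∈ w.primesLE.powerset,
        (∏ p ∈ T, g p) * ∑ k ∈ roughUpTo w (N / ∏ p ∈ T, p), prodPrimeFactors g k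
      = ∑ x ∈ pairs, (∏ p ∈ x.1, g p) * prodPrimeFactors g x.2 := by
        rw [hpairs, sum_sigma]
        exact sum_congr rfl fun T _ ↦ mul_sum _ _ _
    _ = ∑ x ∈ pairs, prodPrimeFactors g (mulProd x) :=
        sum_congr rfl fun x hx ↦ (prodPrimeFactors_prod_mul g (hmem x hx).1 (hmem x hx).2).symm
    _ = ∑ n ∈ pairs.image mulProd, prodPrimeFactors g n := (sum_image hinj).symm
    _ ≤ _ := sum_le_sum_of_subset_of_nonneg himage fun n _ _ ↦ prodPrimeFactors_nonneg hg n

end RoughNumbers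

section Markov

variable {ι : Type*} {s : Finset ι} {u L : ι → ℝ}

theorem sum_powerset_prod_mul_sum_le (hu : ∀ i ∈ s, 0 ≤ u i) (hL : ∀ i ∈ s, 0 ≤ L i) :
    ∑ T ∈ s.powerset, (∏ i ∈ T, u i) * ∑ i ∈ T, L i ≤
      (∑ i ∈ s, u i * L i) * ∏ i ∈ s, (1 + u i) := by
  classical
  induction s using Finset.induction_on with
  | empty => simp
  | insert j s hj ih =>
    rw [forall_mem_insert] at hu hL
    have hprod : ∑ T ∈ s.powerset, ∏ i ∈ T, u i = ∏ i ∈ s, (1 + u i) := (prod_one_add s).symm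
    have hprod0 : 0 ≤ ∏ i ∈ s, (1 + u i) := prod_nonneg fun i hi ↦ by linarith [hu.2 i hi]
    have hinsert : ∑ T ∈ s.powerset, (∏ i ∈ insert j T, u i) * ∑ i ∈ insert j T, L i =
        u j * L j * ∏ i ∈ s, (1 + u i) +
          u j * ∑ T ∈ s.powerset, (∏ i ∈ T, u i) * ∑ i ∈ T, L i := by
      rw [← hprod, mul_sum, mul_sum, ← sum_add_distrib]
      refine sum_congr rfl fun T hT ↦ ?_
      have hjT : j ∉ T := fun h ↦ hj (mem_powerset.mp hT h)
      rw [prod_insert hjT, sum_insert hjT]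
      ring
    rw [sum_powerset_insert hj, hinsert, prod_insert hj, sum_insert hj]
    have hmul := mul_le_mul_of_nonneg_left (ih hu.2 hL.2) (add_nonneg zero_le_one hu.1)
    have hsq := mul_nonneg (mul_nonneg (mul_self_nonneg (u j)) hL.1) hprod0
    nlinarith

theorem prod_one_add_le_two_mul_sum_powerset_filter (hu : ∀ i ∈ s, 0 ≤ u i)
    (hL : ∀ i ∈ s, 0 ≤ L i) {X : ℝ} (hX : 0 < X) (hmean : 2 * ∑ i ∈ s, u i * L i ≤ X) :
    ∏ i ∈ s, (1 + u i) ≤ 2 * ∑ T ∈ s.powerset with ∑ i ∈ T, L i ≤ X, ∏ i ∈ T, u i := by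
  have hu_subset : ∀ T ∈ s.powerset, 0 ≤ ∏ i ∈ T, u i := fun T hT ↦
    prod_nonneg fun i hi ↦ hu i (mem_powerset.mp hT hi)
  have hprod0 : 0 ≤ ∏ i ∈ s, (1 + u i) := prod_nonneg fun i hi ↦ by linarith [hu i hi]
  have hsplit := sum_filter_add_sum_filter_not s.powerset (fun T ↦ ∑ i ∈ T, L i ≤ X)
    fun T ↦ ∏ i ∈ T, u i
  rw [← prod_one_add s] at hsplit
  have htail : X * ∑ T ∈ s.powerset with ¬ ∑ i ∈ T, L i ≤ X, ∏ i ∈ T, u i ≤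
      X * ((∏ i ∈ s, (1 + u i)) / 2) :=
    calc X * ∑ T ∈ s.powerset with ¬ ∑ i ∈ T, L i ≤ X, ∏ i ∈ T, u i
        ≤ ∑ T ∈ s.powerset with ¬ ∑ i ∈ T, L i ≤ X, (∏ i ∈ T, u i) * ∑ i ∈ T, L i := by
          rw [mul_sum]
          refine sum_le_sum fun T hT ↦ ?_
          rw [mul_comm]
          rw [mem_filter, not_le] at hT
          exact mul_le_mul_of_nonneg_left hT.2.le (hu_subset T hT.1)
      _ ≤ ∑ T ∈ s.powerset, (∏ i ∈ T, u i) * ∑ i ∈ T, L i :=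
          sum_le_sum_of_subset_of_nonneg (filter_subset _ _) fun T hT _ ↦
            mul_nonneg (hu_subset T hT) (sum_nonneg fun i hi ↦ hL i (mem_powerset.mp hT hi))
      _ ≤ (∑ i ∈ s, u i * L i) * ∏ i ∈ s, (1 + u i) := sum_powerset_prod_mul_sum_le hu hL
      _ ≤ X / 2 * ∏ i ∈ s, (1 + u i) := by gcongr; linarith
      _ = _ := by ring
  linarith [le_of_mul_le_mul_left htail hX]

theorem exists_prod_primesLE_one_add_le_sum_powerset_filter {g : ℕ → ℝ} {M : ℝ}
    (hg : ∀ p, p.Prime → g p ∈ Set.Icc 0 M) :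
    ∃ A : ℕ, ∀ w ≥ 2, ∏ p ∈ w.primesLE, (1 + g p / p) ≤
      2 * ∑ T ∈ w.primesLE.powerset with ∏ p ∈ T, p ≤ w ^ A, ∏ p ∈ T, g p / p := by
  have hM : 0 ≤ M := (hg 2 Nat.prime_two).1.trans (hg 2 Nat.prime_two).2
  have hlog2 : 0 < Real.log 2 := Real.log_pos one_lt_two
  obtain ⟨A, hA⟩ := exists_nat_gt (2 * M * (1 + (Real.log 4 + 4) / Real.log 2))
  refine ⟨A, fun w hw ↦ ?_⟩
  have hlogw : Real.log 2 ≤ Real.log w := Real.log_le_log two_pos (by exact_mod_cast hw)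
  have hA0 : (0 : ℝ) < A := by
    refine lt_of_le_of_lt ?_ hA
    positivity
  have hg0 : ∀ p ∈ w.primesLE, 0 ≤ g p / p := fun p hp ↦
    div_nonneg (hg p (Nat.prime_of_mem_primesLE hp)).1 p.cast_nonneg
  have hmean : 2 * ∑ p ∈ w.primesLE, g p / p * Real.log p ≤ A * Real.log w :=
    calc 2 * ∑ p ∈ w.primesLE, g p / p * Real.log p
        ≤ 2 * (M * ∑ p ∈ w.primesLE, Real.log p / p) := by
          gcongr
          rw [mul_sum]
          refine sum_le_sum fun p hp ↦ ?_
          rw [div_mul_eq_mul_div, mul_div_assoc]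
          exact mul_le_mul_of_nonneg_right (hg p (Nat.prime_of_mem_primesLE hp)).2 (by positivity)
      _ ≤ 2 * (M * (Real.log w + (Real.log 4 + 4) / Real.log 2 * Real.log w)) := by
          gcongr
          refine (sum_primesLE_log_div_le w).trans ?_
          gcongr
          rw [div_mul_eq_mul_div, le_div_iff₀ hlog2]
          gcongr
      _ = 2 * M * (1 + (Real.log 4 + 4) / Real.log 2) * Real.log w := by ring
      _ ≤ A * Real.log w := by gcongr
  refine (prod_one_add_le_two_mul_sum_powerset_filter hg0
    (fun p _ ↦ Real.log_natCast_nonneg p) (mul_pos hA0 (hlog2.trans_le hlogw)) hmean).trans_eq ?_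
  congr 1
  refine sum_congr (filter_congr fun T hT ↦ ?_) fun _ _ ↦ rfl
  have hpos : ∀ p ∈ T, 0 < p := fun p hp ↦
    (Nat.prime_of_mem_primesLE (mem_powerset.mp hT hp)).pos
  rw [← Real.log_prod fun p hp ↦ Nat.cast_ne_zero.mpr (hpos p hp).ne', ← Real.log_pow,
    Real.log_le_log_iff (prod_pos fun p hp ↦ Nat.cast_pos.mpr (hpos p hp)) (by positivity),
    ← Nat.cast_prod, ← Nat.cast_pow, Nat.cast_le]

end Markov

section MeanValue

variable {g : ℕ → ℝ} {a M : ℝ}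

theorem div_two_mul_div_log_le {m N : ℕ} (hm : 0 < m) (hmN : 2 ≤ N / m) :
    (N : ℝ) / (2 * m) / Real.log N ≤ (N / m : ℕ) / Real.log (N / m : ℕ) := by
  have hlog : 0 < Real.log (N / m : ℕ) := Real.log_pos (by exact_mod_cast hmN)
  have hle : N / m ≤ N := Nat.div_le_self N m
  have hhalf : (N : ℝ) / (2 * m) ≤ (N / m : ℕ) := by
    rw [div_le_iff₀ (by positivity)]
    have hlt := Nat.lt_mul_div_succ N hm
    exact_mod_cast (by nlinarith : N ≤ N / m * (2 * m))
  gcongr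

theorem mul_prod_div_le_prod_mul_sum_roughUpTo (hg : ∀ p, p.Prime → 0 ≤ g p) {c : ℝ} (hc : 0 ≤ c)
    {w N : ℕ} {T : Finset ℕ} (hT : T ⊆ w.primesLE) (hN : 2 ≤ N / ∏ p ∈ T, p)
    (hrough : c * ((N / ∏ p ∈ T, p : ℕ) / Real.log (N / ∏ p ∈ T, p : ℕ)) ≤
      ∑ k ∈ roughUpTo w (N / ∏ p ∈ T, p), prodPrimeFactors g k) :
    c / 2 * (N / Real.log N) * ∏ p ∈ T, g p / p ≤
      (∏ p ∈ T, g p) * ∑ k ∈ roughUpTo w (N / ∏ p ∈ T, p), prodPrimeFactors g k := by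
  have hprime : ∀ p ∈ T, p.Prime := fun p hp ↦ Nat.prime_of_mem_primesLE (hT hp)
  calc c / 2 * (N / Real.log N) * ∏ p ∈ T, g p / p
      = (∏ p ∈ T, g p) * (c * (N / (2 * (∏ p ∈ T, p : ℕ)) / Real.log N)) := by
        rw [prod_div_distrib, ← Nat.cast_prod]
        ring
    _ ≤ _ := by
        refine mul_le_mul_of_nonneg_left ?_ (prod_nonneg fun p hp ↦ hg p (hprime p hp))
        refine (mul_le_mul_of_nonneg_left ?_ hc).trans hrough
        exact div_two_mul_div_log_le (prod_pos fun p hp ↦ (hprime p hp).pos) hN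

theorem HasPrimeMean.exists_mul_prod_le_sum_prodPrimeFactors (hmean : HasPrimeMean g a)
    (hg : ∀ p, p.Prime → g p ∈ Set.Icc 0 M) (hMa : M < 2 * a) :
    ∃ c : ℝ, 0 < c ∧ ∃ A : ℕ, A ≠ 0 ∧ ∀ᶠ w : ℕ in atTop, ∀ N ≥ w ^ A,
      c * (N / Real.log N) * ∏ p ∈ w.primesLE, (1 + g p / p) ≤
        ∑ n ∈ Ioc 0 N, prodPrimeFactors g n := by
  obtain ⟨c, hc, hrough⟩ := hmean.exists_le_sum_roughUpTo hg hMa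
  obtain ⟨Y, hY⟩ := eventually_atTop.mp hrough
  obtain ⟨A, hA⟩ := exists_prod_primesLE_one_add_le_sum_powerset_filter hg
  have hg0 : ∀ p, p.Prime → 0 ≤ g p := fun p hp ↦ (hg p hp).1
  refine ⟨c / 4, by positivity, A + 4, by lia, ?_⟩
  filter_upwards [eventually_ge_atTop (max 2 Y)] with w hw N hN
  obtain ⟨hw2, hwY⟩ := max_le_iff.mp hw
  have hprod0 : ∀ T ∈ w.primesLE.powerset, 0 ≤ ∏ p ∈ T, g p := fun T hT ↦
    prod_nonneg fun p hp ↦ hg0 p (Nat.prime_of_mem_primesLE (mem_powerset.mp hT hp))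
  have hterm (T : Finset ℕ) (hT : T ⊆ w.primesLE) (hTA : ∏ p ∈ T, p ≤ w ^ A) :
      c / 2 * (N / Real.log N) * ∏ p ∈ T, g p / p ≤
        (∏ p ∈ T, g p) * ∑ k ∈ roughUpTo w (N / ∏ p ∈ T, p), prodPrimeFactors g k := by
    have hquot : w ^ 4 ≤ N / ∏ p ∈ T, p := by
      rw [Nat.le_div_iff_mul_le
        (prod_pos fun p hp ↦ (Nat.prime_of_mem_primesLE (hT hp)).pos)]
      calc w ^ 4 * ∏ p ∈ T, p ≤ w ^ 4 * w ^ A := Nat.mul_le_mul_left _ hTA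
        _ = w ^ (A + 4) := by rw [← pow_add, add_comm]
        _ ≤ N := hN
    have hww : w ≤ w ^ 4 := Nat.le_self_pow four_ne_zero w
    exact mul_prod_div_le_prod_mul_sum_roughUpTo hg0 hc.le hT (by lia) (hY _ (by lia) w hquot)
  calc c / 4 * (N / Real.log N) * ∏ p ∈ w.primesLE, (1 + g p / p)
      ≤ c / 4 * (N / Real.log N) *
          (2 * ∑ T ∈ w.primesLE.powerset with ∏ p ∈ T, p ≤ w ^ A, ∏ p ∈ T, g p / p) := by
        gcongr
        exact hA w hw2
    _ = ∑ T ∈ w.primesLE.powerset with ∏ p ∈ T, p ≤ w ^ A,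
          c / 2 * (N / Real.log N) * ∏ p ∈ T, g p / p := by rw [← mul_sum]; ring
    _ ≤ ∑ T ∈ w.primesLE.powerset with ∏ p ∈ T, p ≤ w ^ A,
          (∏ p ∈ T, g p) * ∑ k ∈ roughUpTo w (N / ∏ p ∈ T, p), prodPrimeFactors g k :=
        sum_le_sum fun T hT ↦ hterm T (mem_powerset.mp (mem_filter.mp hT).1) (mem_filter.mp hT).2
    _ ≤ ∑ T ∈ w.primesLE.powerset,
          (∏ p ∈ T, g p) * ∑ k ∈ roughUpTo w (N / ∏ p ∈ T, p), prodPrimeFactors g k :=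
        sum_le_sum_of_subset_of_nonneg (filter_subset _ _) fun T hT _ ↦
          mul_nonneg (hprod0 T hT) (sum_nonneg fun k _ ↦ prodPrimeFactors_nonneg hg0 k)
    _ ≤ _ := sum_powerset_primesLE_mul_sum_roughUpTo_le hg0 w N

theorem tendsto_nthRoot_atTop {A : ℕ} (hA : A ≠ 0) : Tendsto (Nat.nthRoot A) atTop atTop :=
  tendsto_atTop.mpr fun b ↦ (eventually_ge_atTop (b ^ A)).mono fun _ hN ↦
    (Nat.le_nthRoot_iff hA).mpr hN

theorem log_le_two_mul_mul_log_nthRoot {A N : ℕ} (hA : A ≠ 0) (hN : 2 ≤ Nat.nthRoot A N) :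
    Real.log N ≤ 2 * A * Real.log (Nat.nthRoot A N) := by
  have hpow : N ≤ Nat.nthRoot A N ^ (2 * A) := by
    rw [pow_mul]
    exact (Nat.lt_pow_nthRoot_add_one hA N).le.trans (Nat.pow_le_pow_left (by nlinarith) A)
  have hN0 : 0 < N := Nat.pos_of_ne_zero <| by
    rintro rfl
    exact absurd ((Nat.le_nthRoot_iff hA).mp hN) (by simp)
  calc Real.log N ≤ Real.log ((Nat.nthRoot A N : ℝ) ^ (2 * A)) :=
        Real.log_le_log (by exact_mod_cast hN0) (by exact_mod_cast hpow)
    _ = _ := by rw [Real.log_pow]; push_cast; rfl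

theorem HasPrimeMean.tendsto_mean_prodPrimeFactors_atTop (hmean : HasPrimeMean g a)
    (hg : ∀ p, p.Prime → g p ∈ Set.Icc 0 M) (hMa : M < 2 * a) (ha : 1 < a) :
    Tendsto (fun N : ℕ ↦ (∑ n ∈ Ioc 0 N, prodPrimeFactors g n) / N) atTop atTop := by
  obtain ⟨c, hc, A, hA, hbound⟩ := hmean.exists_mul_prod_le_sum_prodPrimeFactors hg hMa
  have hroot := tendsto_nthRoot_atTop hA
  refine tendsto_atTop_mono' _ ?_ (((hmean.tendsto_prod_div_log hg ha).comp hroot).const_mul_atTop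
    (show 0 < c / (2 * A) by positivity))
  filter_upwards [hroot.eventually hbound, hroot.eventually_ge_atTop 2, eventually_gt_atTop 1]
    with N hN hw hN1
  have hlogN : 0 < Real.log N := Real.log_pos (by exact_mod_cast hN1)
  have hlogw : 0 < Real.log (Nat.nthRoot A N) := Real.log_pos (by exact_mod_cast hw)
  have hprod0 : 0 ≤ ∏ p ∈ (Nat.nthRoot A N).primesLE, (1 + g p / p) := prod_nonneg fun p hp ↦ by
    have := (hg p (Nat.prime_of_mem_primesLE hp)).1
    positivity
  rw [le_div_iff₀ (by positivity)]
  refine le_trans ?_ (hN N (Nat.pow_nthRoot_le (.inl hA)))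
  simp only [Function.comp_apply]
  calc c / (2 * A) * ((∏ p ∈ (Nat.nthRoot A N).primesLE, (1 + g p / p)) /
          Real.log (Nat.nthRoot A N)) * N
      = c * (N / (2 * A * Real.log (Nat.nthRoot A N))) *
          ∏ p ∈ (Nat.nthRoot A N).primesLE, (1 + g p / p) := by field_simp
    _ ≤ _ := by
      gcongr
      exact log_le_two_mul_mul_log_nthRoot hA hw

end MeanValue

section MoebiusTwist

open ArithmeticFunction (IsMultiplicative zeta)

variable {f : ArithmeticFunction ℝ}

theorem moebius_pmul_mul_zeta_eq_prodPrimeFactors {R : Type*} [CommRing R]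
    {f : ArithmeticFunction R} (hf : f.IsMultiplicative) :
    (moebius : ArithmeticFunction R).pmul f * zeta = prodPrimeFactors fun p ↦ 1 - f p := by
  have hleft := (ArithmeticFunction.isMultiplicative_moebius.intCast.pmul hf).mul
    ArithmeticFunction.isMultiplicative_zeta.natCast
  refine (IsMultiplicative.eq_iff_eq_on_prime_powers _ hleft _
    (IsMultiplicative.prodPrimeFactors _)).mpr fun p i hp ↦ ?_
  rcases i with _ | i
  · rw [pow_zero, hleft.map_one, (IsMultiplicative.prodPrimeFactors _).map_one]
  have hhigher : ∑ k ∈ range i, (moebius (p ^ (k + 1 + 1)) : R) * f (p ^ (k + 1 + 1)) = 0 :=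
    sum_eq_zero fun k _ ↦ by
      rw [ArithmeticFunction.moebius_apply_prime_pow hp (by lia), if_neg (by lia), Int.cast_zero,
        zero_mul]
  rw [ArithmeticFunction.coe_mul_zeta_apply, Nat.sum_divisors_prime_pow hp,
    ArithmeticFunction.prodPrimeFactors_apply (pow_ne_zero _ hp.ne_zero),
    Nat.primeFactors_prime_pow i.succ_ne_zero hp, prod_singleton]
  simp only [ArithmeticFunction.pmul_apply, ArithmeticFunction.intCoe_apply]
  rw [sum_range_succ', sum_range_succ', hhigher, zero_add, zero_add, pow_one, pow_zero,
    ArithmeticFunction.moebius_apply_prime hp, ArithmeticFunction.moebius_apply_one, hf.map_one]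
  push_cast
  ring

theorem abs_moebius_pmul_le_one (hf : f.IsMultiplicative) (hf_le : ∀ p, p.Prime → |f p| ≤ 1)
    (n : ℕ) : |(moebius : ArithmeticFunction ℝ).pmul f n| ≤ 1 := by
  rcases eq_or_ne n 0 with rfl | hn
  · simp
  have hmul := ArithmeticFunction.isMultiplicative_moebius.intCast (R := ℝ) |>.pmul hf
  rw [IsMultiplicative.multiplicative_factorization _ hmul hn, Finsupp.prod, abs_prod]
  refine prod_le_one (fun _ _ ↦ abs_nonneg _) fun p hp ↦ ?_
  have hp_prime := Nat.prime_of_mem_primeFactors hp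
  rw [ArithmeticFunction.pmul_apply, ArithmeticFunction.intCoe_apply,
    ArithmeticFunction.moebius_apply_prime_pow hp_prime (Finsupp.mem_support_iff.mp hp)]
  split_ifs with h
  · rw [h, pow_one, Int.cast_neg, Int.cast_one, neg_one_mul, abs_neg]
    exact hf_le p hp_prime
  · simp

theorem mean_mul_zeta_sub_le_sum_div {h : ArithmeticFunction ℝ} {M : ℝ} (hM : ∀ n, |h n| ≤ M)
    (N : ℕ) : (∑ n ∈ Ioc 0 N, (h * zeta) n) / N - M ≤ ∑ n ∈ Ioc 0 N, h n / n := by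
  rcases N.eq_zero_or_pos with rfl | hN
  · simpa using (abs_nonneg _).trans (hM 0)
  have hN0 : (0 : ℝ) < N := by exact_mod_cast hN
  rw [ArithmeticFunction.sum_Ioc_mul_zeta_eq_sum, sub_le_iff_le_add, div_le_iff₀ hN0]
  calc ∑ n ∈ Ioc 0 N, h n * (N / n : ℕ)
      ≤ ∑ n ∈ Ioc 0 N, (h n / n * N + M) := by
        refine sum_le_sum fun n _ ↦ ?_
        have hfloor_le : ((N / n : ℕ) : ℝ) ≤ N / n := Nat.cast_div_le
        have hlt_floor : (N : ℝ) / n < (N / n : ℕ) + 1 := by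
          rw [← Nat.floor_div_eq_div (K := ℝ)]
          exact Nat.lt_floor_add_one _
        have habs : |h n * ((N / n : ℕ) - N / n)| ≤ M * 1 := by
          rw [abs_mul]
          refine mul_le_mul (hM n) ?_ (abs_nonneg _) ((abs_nonneg _).trans (hM n))
          rw [abs_le]
          constructor <;> linarith
        calc h n * (N / n : ℕ) = h n / n * N + h n * ((N / n : ℕ) - N / n) := by ring
          _ ≤ _ := by linarith [le_of_abs_le habs]
    _ = (∑ n ∈ Ioc 0 N, h n / n + M) * N := by
        rw [sum_add_distrib, sum_const, Nat.card_Ioc, tsub_zero, nsmul_eq_mul, ← sum_mul]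
        ring

end MoebiusTwist

theorem HasPrimeMean.const_sub {g : ℕ → ℝ} {a : ℝ} (hmean : HasPrimeMean g a) (b : ℝ) :
    HasPrimeMean (fun n ↦ b - g n) (b - a) := by
  obtain ⟨L, hL⟩ := hmean
  refine ⟨-L, hL.neg.congr fun N ↦ ?_⟩
  rw [← sum_neg_distrib]
  exact sum_congr rfl fun p _ ↦ by ring

theorem HasPrimeMean.congr {g g' : ℕ → ℝ} {a : ℝ} (hmean : HasPrimeMean g a)
    (hgg' : ∀ p, p.Prime → g p = g' p) : HasPrimeMean g' a := by
  obtain ⟨L, hL⟩ := hmean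
  refine ⟨L, hL.congr fun N ↦ sum_congr rfl fun p hp ↦ ?_⟩
  rw [hgg' p (Nat.prime_of_mem_primesLE hp)]

theorem hasPrimeMean_of_tendsto_primesBelow {g : ℕ → ℝ} {a L : ℝ}
    (hL : Tendsto (fun N : ℕ ↦ ∑ p ∈ N.primesBelow, (a - g p) / p) atTop (𝓝 L)) :
    HasPrimeMean g a := by
  refine ⟨-L, ((tendsto_add_atTop_iff_nat 1).mpr hL).neg.congr fun N ↦ ?_⟩
  rw [← sum_neg_distrib]
  exact sum_congr rfl fun p _ ↦ by ring

theorem isMultiplicative_toArithmeticFunction {R : Type*} [CommMonoidWithZero R] {f : ℕ → R}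
    (hf1 : f 1 = 1) (hfmul : ∀ m n, m.Coprime n → f (m * n) = f m * f n) :
    (toArithmeticFunction f).IsMultiplicative := by
  refine ArithmeticFunction.IsMultiplicative.iff_ne_zero.mpr ⟨hf1, fun hm hn hmn ↦ ?_⟩
  simpa [toArithmeticFunction, hm, hn] using hfmul _ _ hmn

theorem stmt_7_general (f : ℕ → ℝ) (hf1 : f 1 = 1)
    (hfmul : ∀ m n, m.Coprime n → f (m * n) = f m * f n) (hf_le : ∀ p, p.Prime → |f p| ≤ 1)
    {c : ℝ} (hc : c < 0) (hmean : HasPrimeMean f c) :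
    Tendsto (fun N : ℕ ↦ ∑ n ∈ Icc 1 N, moebius n * f n / n) atTop atTop := by
  have hF := isMultiplicative_toArithmeticFunction hf1 hfmul
  have hF_apply {n : ℕ} (hn : n ≠ 0) : toArithmeticFunction f n = f n := if_neg hn
  have hF_le (p : ℕ) (hp : p.Prime) : |toArithmeticFunction f p| ≤ 1 :=
    (hF_apply hp.ne_zero).symm ▸ hf_le p hp
  have hbound (p : ℕ) (hp : p.Prime) : 1 - toArithmeticFunction f p ∈ Set.Icc (0 : ℝ) 2 := by
    obtain ⟨hlower, hupper⟩ := abs_le.mp (hF_le p hp)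
    constructor <;> linarith
  have hmean_sub : HasPrimeMean (fun p ↦ 1 - toArithmeticFunction f p) (1 - c) :=
    (hmean.congr fun p hp ↦ (hF_apply hp.ne_zero).symm).const_sub 1
  have hmeans := hmean_sub.tendsto_mean_prodPrimeFactors_atTop hbound (by linarith)
    (by linarith)
  rw [← moebius_pmul_mul_zeta_eq_prodPrimeFactors hF] at hmeans
  refine (tendsto_atTop_mono (mean_mul_zeta_sub_le_sum_div (abs_moebius_pmul_le_one hF hF_le))
    (tendsto_atTop_add_const_right _ (-1) hmeans)).congr fun N ↦ sum_congr rfl fun n hn ↦ ?_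
  rw [ArithmeticFunction.pmul_apply, ArithmeticFunction.intCoe_apply,
    hF_apply (mem_Ioc.mp hn).1.ne']

/-- If `f` is completely multiplicative with values in `{-1, 1}`, `c ∈ [-1, 0)`, and
`∑_p (c - f p)/p` converges, then `∑_{n ≤ x} μ n * f n / n → ∞`. -/
theorem stmt_7 (f : ℕ → ℤ)
    (hf1 : f 1 = 1)
    (hfmul : ∀ a b : ℕ, f (a * b) = f a * f b)
    (hfpm : ∀ n : ℕ, 1 ≤ n → f n = 1 ∨ f n = -1)
    (c : ℝ) (hc : c ∈ Set.Ico (-1 : ℝ) 0)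
    (hconv : ∃ L : ℝ, Filter.Tendsto
      (fun N : ℕ => ∑ p ∈ N.primesBelow, (c - (f p : ℝ)) / p) Filter.atTop (nhds L)) :
    Filter.Tendsto
      (fun N : ℕ => ∑ n ∈ Finset.Icc 1 N, ((ArithmeticFunction.moebius n * f n : ℤ) : ℝ) / n)
      Filter.atTop Filter.atTop := by
  obtain ⟨L, hL⟩ := hconv
  simpa using stmt_7_general (fun n ↦ (f n : ℝ)) (by simp [hf1]) (by simp [hfmul])
    (fun p hp ↦ by rcases hfpm p hp.one_le with h | h <;> simp [h]) hc.2
    (hasPrimeMean_of_tendsto_primesBelow hL)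
end

section
/- Let f : ℕ → ℤ be a completely multiplicative function taking values in {-1, 1}, and for σ > 1 let F(σ) = ∑_{n ≥ 1} f(n)/n^σ. Then there is a constant C > 0 such that for all σ > 1, F(σ) > 0 and |log F(σ) - ∑_p f(p)/p^σ| ≤ C, where the sum runs over primes p. (Indeed log F(σ) = ∑_p f(p)/p^σ + ∑_p ∑_{k ≥ 2} f(p)^k/(k p^{kσ}), and the double sum is bounded uniformly for σ > 1.) -/
/-!
By the Euler product, `∑ g n = exp (∑_p -log (1 - g p))` for every completely multiplicative `g`
with absolutely convergent sum, so the sum is positive. Its logarithm differs from `∑_p g p` only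
by the second-order remainders of `-log (1 - g p)`. If `|g p| ≤ 1 / p`, these remainders are at
most `1 / (p (p - 1))`, and `∑_{n ≥ 2} 1 / (n (n - 1))` telescopes to `1`. Apply this to
`g n = f n / n ^ σ`: the resulting bound depends neither on `σ` nor on `f`.
-/

section RemainderBounds

lemma abs_neg_log_one_sub_sub_self_le {x : ℝ} (hx : |x| < 1) :
    |-Real.log (1 - x) - x| ≤ |x| ^ 2 / (1 - |x|) := by
  have taylor := Real.abs_log_sub_add_sum_range_le hx 1
  simp only [Finset.sum_range_one, zero_add, pow_one, Nat.cast_zero, div_one] at taylor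
  rwa [← neg_add', abs_neg, add_comm]

lemma abs_neg_log_one_sub_sub_self_le_inv {x a : ℝ} (ha : 1 < a) (hx : |x| ≤ 1 / a) :
    |-Real.log (1 - x) - x| ≤ (a * (a - 1))⁻¹ := by
  have ha_inv : 1 / a < 1 := (div_lt_one (by linarith)).mpr ha
  calc |-Real.log (1 - x) - x| ≤ |x| ^ 2 / (1 - |x|) :=
        abs_neg_log_one_sub_sub_self_le (hx.trans_lt ha_inv)
    _ ≤ (1 / a) ^ 2 / (1 - 1 / a) := by
        have : 0 < 1 - 1 / a := by linarith
        gcongr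
    _ = (a * (a - 1))⁻¹ := by
        have : a - 1 ≠ 0 := by linarith
        field_simp

/- The terms at `n = 0` and `n = 1` are `0⁻¹ = 0`, so this is the sum over `n ≥ 2`. -/
lemma hasSum_inv_mul_sub_one : HasSum (fun n : ℕ ↦ ((n : ℝ) * (n - 1))⁻¹) 1 := by
  have partial_sum (N : ℕ) :
      ∑ n ∈ Finset.range N, (((n : ℝ) + 2) * (n + 1))⁻¹ = 1 - 1 / ((N : ℝ) + 1) := by
    induction N with
    | zero => simp
    | succ N ih =>
      rw [Finset.sum_range_succ, ih, Nat.cast_add_one]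
      field_simp
      ring
  have hasSum_shift : HasSum (fun n : ℕ ↦ (((n : ℝ) + 2) * (n + 1))⁻¹) 1 := by
    rw [hasSum_iff_tendsto_nat_of_nonneg (fun n ↦ by positivity)]
    simp only [partial_sum]
    simpa only [sub_zero] using tendsto_one_div_add_atTop_nhds_zero_nat.const_sub (1 : ℝ)
  rw [← hasSum_nat_add_iff' 2]
  convert! hasSum_shift using 2
  · push_cast
    ring
  · simp [Finset.sum_range_succ]

lemma tsum_primes_inv_mul_sub_one_le_one :
    ∑' p : Nat.Primes, ((p : ℝ) * (p - 1))⁻¹ ≤ 1 := by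
  have term_nonneg : ∀ n : ℕ, 0 ≤ ((n : ℝ) * (n - 1))⁻¹
    | 0 => by simp
    | n + 1 => by
      rw [Nat.cast_add_one, add_sub_cancel_right]
      positivity
  calc ∑' p : Nat.Primes, ((p : ℝ) * (p - 1))⁻¹ ≤ ∑' n : ℕ, ((n : ℝ) * (n - 1))⁻¹ :=
        tsum_comp_le_tsum_of_inj hasSum_inv_mul_sub_one.summable term_nonneg
          Subtype.val_injective
    _ = 1 := hasSum_inv_mul_sub_one.tsum_eq

end RemainderBounds

section EulerProduct

lemma summable_neg_log_one_sub {ι : Type*} {a : ι → ℝ} (ha : Summable a) :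
    Summable fun i ↦ -Real.log (1 - a i) := by
  simp only [sub_eq_add_neg]
  exact (Real.summable_log_one_add_of_summable ha.neg).neg

variable {g : ℕ →*₀ ℝ}

lemma exp_tsum_primes_neg_log_eq_tsum (hg : Summable (‖g ·‖)) :
    Real.exp (∑' p : Nat.Primes, -Real.log (1 - g p)) = ∑' n, g n := by
  have inv_pos_prime (p : Nat.Primes) : 0 < (1 - g p)⁻¹ := by
    have hlt : ‖g p‖ < 1 := hg.of_norm.norm_lt_one (f := g.toMonoidHom) p.prop.one_lt
    exact inv_pos.mpr (sub_pos.mpr ((le_abs_self _).trans_lt hlt))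
  have hlog : Summable fun p : Nat.Primes ↦ -Real.log (1 - g p) :=
    summable_neg_log_one_sub (hg.of_norm.subtype Nat.Prime)
  simp only [← Real.log_inv] at hlog ⊢
  rw [Real.rexp_tsum_eq_tprod inv_pos_prime hlog,
    EulerProduct.eulerProduct_completely_multiplicative_tprod hg]

lemma tsum_monoidWithZeroHom_pos (hg : Summable (‖g ·‖)) : 0 < ∑' n, g n :=
  exp_tsum_primes_neg_log_eq_tsum hg ▸ Real.exp_pos _

lemma log_tsum_sub_tsum_primes (hg : Summable (‖g ·‖)) :
    Real.log (∑' n, g n) - ∑' p : Nat.Primes, g p =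
      ∑' p : Nat.Primes, (-Real.log (1 - g p) - g p) := by
  have hprimes : Summable fun p : Nat.Primes ↦ g p := hg.of_norm.subtype Nat.Prime
  rw [← exp_tsum_primes_neg_log_eq_tsum hg, Real.log_exp]
  exact ((summable_neg_log_one_sub hprimes).tsum_sub hprimes).symm

lemma abs_log_tsum_sub_tsum_primes_le_one (hg : Summable (‖g ·‖))
    (hprime : ∀ p : Nat.Primes, |g p| ≤ 1 / p) :
    |Real.log (∑' n, g n) - ∑' p : Nat.Primes, g p| ≤ 1 := by
  have remainder_le (p : Nat.Primes) :
      ‖-Real.log (1 - g p) - g p‖ ≤ ((p : ℝ) * (p - 1))⁻¹ :=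
    abs_neg_log_one_sub_sub_self_le_inv (mod_cast p.prop.one_lt) (hprime p)
  rw [log_tsum_sub_tsum_primes hg]
  exact (tsum_of_norm_bounded (hasSum_inv_mul_sub_one.summable.subtype Nat.Prime).hasSum
    remainder_le).trans tsum_primes_inv_mul_sub_one_le_one

end EulerProduct

section DirichletSeries

/-- The summand `n ↦ f n / n ^ s` of the Dirichlet series of a completely multiplicative `f`.
It is set to `0` at `n = 0`, so that it is a monoid-with-zero homomorphism, the form in which
Mathlib states Euler products. -/
noncomputable def dirichletSummand (f : ℕ →* ℝ) (s : ℝ) : ℕ →*₀ ℝ where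
  toFun n := if n = 0 then 0 else f n / (n : ℝ) ^ s
  map_zero' := if_pos rfl
  map_one' := by simp
  map_mul' m n := by
    rcases eq_or_ne m 0 with rfl | hm
    · simp
    rcases eq_or_ne n 0 with rfl | hn
    · simp
    simp only [mul_ne_zero hm hn, hm, hn, if_false, map_mul, Nat.cast_mul]
    rw [Real.mul_rpow m.cast_nonneg n.cast_nonneg, mul_div_mul_comm]

variable {f : ℕ →* ℝ} {s : ℝ}

lemma dirichletSummand_apply {n : ℕ} (hn : n ≠ 0) : dirichletSummand f s n = f n / (n : ℝ) ^ s :=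
  if_neg hn

lemma abs_dirichletSummand_le (hf : ∀ n ≠ 0, |f n| ≤ 1) (n : ℕ) :
    |dirichletSummand f s n| ≤ 1 / (n : ℝ) ^ s := by
  rcases eq_or_ne n 0 with rfl | hn
  · rw [map_zero, abs_zero]
    positivity
  · rw [dirichletSummand_apply hn, abs_div, abs_of_nonneg (by positivity : 0 ≤ (n : ℝ) ^ s)]
    gcongr
    exact hf n hn

lemma summable_norm_dirichletSummand (hf : ∀ n ≠ 0, |f n| ≤ 1) (hs : 1 < s) :
    Summable (‖dirichletSummand f s ·‖) :=
  .of_nonneg_of_le (fun _ ↦ norm_nonneg _) (abs_dirichletSummand_le hf)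
    (Real.summable_one_div_nat_rpow.mpr hs)

lemma abs_dirichletSummand_le_one_div (hf : ∀ n ≠ 0, |f n| ≤ 1) (hs : 1 ≤ s) {n : ℕ}
    (hn : n ≠ 0) : |dirichletSummand f s n| ≤ 1 / n := by
  have one_le : (1 : ℝ) ≤ n := mod_cast Nat.one_le_iff_ne_zero.mpr hn
  refine (abs_dirichletSummand_le hf n).trans ?_
  gcongr
  exact Real.self_le_rpow_of_one_le one_le hs

lemma tsum_dirichletSummand_eq_tsum_succ (hsum : Summable (dirichletSummand f s)) :
    ∑' n, dirichletSummand f s n = ∑' n : ℕ, f (n + 1) / ((n : ℝ) + 1) ^ s := by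
  rw [hsum.tsum_eq_zero_add, map_zero, zero_add]
  simp only [dirichletSummand_apply (Nat.succ_ne_zero _), Nat.cast_add_one]

end DirichletSeries

theorem stmt_8_general (f : ℕ →* ℝ) (hf : ∀ n ≠ 0, |f n| ≤ 1) {σ : ℝ} (hσ : 1 < σ) :
    0 < ∑' n : ℕ, f (n + 1) / ((n : ℝ) + 1) ^ σ ∧
      |Real.log (∑' n : ℕ, f (n + 1) / ((n : ℝ) + 1) ^ σ) -
        ∑' p : Nat.Primes, f p / (p : ℝ) ^ σ| ≤ 1 := by
  have hsum := summable_norm_dirichletSummand hf hσ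
  have tsum_primes_eq :
      ∑' p : Nat.Primes, f p / (p : ℝ) ^ σ = ∑' p : Nat.Primes, dirichletSummand f σ p :=
    tsum_congr fun p ↦ (dirichletSummand_apply p.prop.ne_zero).symm
  rw [← tsum_dirichletSummand_eq_tsum_succ hsum.of_norm, tsum_primes_eq]
  exact ⟨tsum_monoidWithZeroHom_pos hsum, abs_log_tsum_sub_tsum_primes_le_one hsum fun p ↦
    abs_dirichletSummand_le_one_div hf hσ.le p.prop.ne_zero⟩

/-- For a completely multiplicative `f` with values in `{-1, 1}` and
`F σ = ∑_{n ≥ 1} f n / n^σ` for `σ > 1`, there is a constant `C > 0` such that for all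
`σ > 1` we have `F σ > 0` and `|log (F σ) - ∑_p f p / p^σ| ≤ C`. -/
theorem stmt_8 (f : ℕ → ℤ)
    (hf1 : f 1 = 1)
    (hfmul : ∀ a b : ℕ, f (a * b) = f a * f b)
    (hfpm : ∀ n : ℕ, 1 ≤ n → f n = 1 ∨ f n = -1)
    (F : ℝ → ℝ)
    (hF : ∀ σ : ℝ, 1 < σ → F σ = ∑' n : ℕ, (f (n + 1) : ℝ) / ((n : ℝ) + 1) ^ σ) :
    ∃ C : ℝ, 0 < C ∧ ∀ σ : ℝ, 1 < σ →
      0 < F σ ∧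
      |Real.log (F σ) - ∑' p : Nat.Primes, (f (p : ℕ) : ℝ) / (p : ℝ) ^ σ| ≤ C := by
  let fHom : ℕ →* ℝ := (Int.castRingHom ℝ : ℤ →* ℝ).comp ⟨⟨f, hf1⟩, hfmul⟩
  have abs_fHom_le (n : ℕ) (hn : n ≠ 0) : |fHom n| ≤ 1 := by
    change |(f n : ℝ)| ≤ 1
    rcases hfpm n (Nat.one_le_iff_ne_zero.mpr hn) with h | h <;> simp [h]
  exact ⟨1, one_pos, fun σ hσ ↦ hF σ hσ ▸ stmt_8_general fHom abs_fHom_le hσ⟩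
end

section
/- Let f : ℕ → ℤ be a completely multiplicative function taking values in {-1, 1}, and let c ∈ (0, 1] be a real number. Suppose ∑_{p ≤ x} f(p) = c·(x/log x)·(1 + o(1)) as x → ∞, the sum running over primes p. Then the partial sums of f are unbounded: lim sup_{N→∞} |∑_{n=1}^{N} f(n)| = ∞. -/
open Filter Asymptotics

open scoped Topology

/-!
Suppose the partial sums of `f` are at most `C`. Summation by parts gives
`F(s) = ∑ f(n) n⁻ˢ ≤ C` for all `s > 1`. On the other hand `(1 - x)⁻¹ ≥ eˣ` turns the Euler product
into `F(s) ≥ exp (∑ f(p) p⁻ˢ)`, and the exponent tends to infinity as `s → 1⁺` as soon as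
`∑ f(p) / p = ∞`. A lower bound `∑_{p ≤ x} f(p) ≥ δ x / log x` is enough for the latter, because
`∑ 1 / (n log n)` diverges.
-/

section AbelSummation

lemma sum_Ico_mul_le_of_antitoneOn {a w : ℕ → ℝ} {m : ℕ} {C : ℝ} (hw : AntitoneOn w (Set.Ici m))
    (hw₀ : ∀ k ≥ m, 0 ≤ w k) (ha : ∀ n ≥ m, ∑ k ∈ Finset.Ico m n, a k ≤ C) {n : ℕ} (hn : m ≤ n) :
    ∑ k ∈ Finset.Ico m n, a k * w k ≤ C * w m := by
  -- Keeping the boundary term of the summation by parts makes the bound inductive.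
  suffices h : ∑ k ∈ Finset.Ico m n, a k * w k + (C - ∑ k ∈ Finset.Ico m n, a k) * w n ≤ C * w m by
    linarith [mul_nonneg (sub_nonneg.2 (ha n hn)) (hw₀ n hn)]
  induction n, hn using Nat.le_induction with
  | base => simp
  | succ n hn ih =>
    have hstep : w (n + 1) ≤ w n := hw hn (hn.trans n.le_succ) n.le_succ
    have hsum := ha (n + 1) (hn.trans n.le_succ)
    rw [Finset.sum_Ico_succ_top hn] at hsum ⊢
    rw [Finset.sum_Ico_succ_top hn]
    linarith [mul_le_mul_of_nonneg_left hstep (sub_nonneg.2 hsum)]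

lemma le_sum_range_mul_of_antitoneOn {a w : ℕ → ℝ} {N : ℕ} {K : ℝ}
    (hw : AntitoneOn w (Set.Ici N)) (hw₀ : ∀ k ≥ N, 0 ≤ w k)
    (ha : ∀ n ≥ N, K ≤ ∑ k ∈ Finset.range n, a k) {n : ℕ} (hn : N ≤ n) :
    ∑ k ∈ Finset.range N, a k * w k + (K - ∑ k ∈ Finset.range N, a k) * w N ≤
      ∑ k ∈ Finset.range n, a k * w k := by
  have htail := sum_Ico_mul_le_of_antitoneOn (a := fun k ↦ -a k)
    (C := ∑ k ∈ Finset.range N, a k - K) hw hw₀ (fun n hn ↦ by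
      rw [Finset.sum_neg_distrib, Finset.sum_Ico_eq_sub _ hn]
      linarith [ha n hn]) hn
  simp only [neg_mul, Finset.sum_neg_distrib] at htail
  rw [← Finset.sum_range_add_sum_Ico _ hn]
  linarith

lemma le_sum_primesBelow_mul_of_antitoneOn {a w : ℕ → ℝ} {N : ℕ} {K : ℝ}
    (hw : AntitoneOn w (Set.Ici N)) (hw₀ : ∀ k ≥ N, 0 ≤ w k)
    (ha : ∀ n ≥ N, K ≤ ∑ p ∈ Nat.primesBelow n, a p) {n : ℕ} (hn : N ≤ n) :
    ∑ p ∈ Nat.primesBelow N, a p * w p + (K - ∑ p ∈ Nat.primesBelow N, a p) * w N ≤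
      ∑ p ∈ Nat.primesBelow n, a p * w p := by
  simp only [Nat.primesBelow, Finset.sum_filter, ← ite_zero_mul] at ha ⊢
  exact le_sum_range_mul_of_antitoneOn hw hw₀ ha hn

lemma sum_primesBelow_div (a : ℕ → ℝ) (n : ℕ) :
    ∑ p ∈ Nat.primesBelow (n + 1), a p / p =
      (∑ p ∈ Nat.primesBelow (n + 1), a p) / n +
        ∑ k ∈ Finset.range n, (∑ p ∈ Nat.primesBelow (k + 1), a p) / (k * (k + 1)) := by
  induction n with
  | zero => simp
  | succ n ih =>
    have hsucc (b : ℕ → ℝ) : ∑ p ∈ Nat.primesBelow (n + 1 + 1), b p =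
        ∑ p ∈ Nat.primesBelow (n + 1), b p + if (n + 1).Prime then b (n + 1) else 0 := by
      simp only [Nat.primesBelow, Finset.sum_filter, Finset.sum_range_succ _ (n + 1)]
    rw [hsucc, hsucc, ih, Finset.sum_range_succ, Nat.cast_succ]
    rcases eq_or_ne n 0 with rfl | hn
    · simp
    · split_ifs <;> field_simp <;> ring

end AbelSummation

section Abelian

lemma antitoneOn_natCast_rpow {r : ℝ} (hr : r ≤ 0) :
    AntitoneOn (fun n : ℕ ↦ (n : ℝ) ^ r) (Set.Ici 1) := fun _ hm _ _ hmn ↦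
  Real.rpow_le_rpow_of_nonpos (Nat.cast_pos.2 hm) (Nat.cast_le.2 hmn) hr

lemma eventually_le_sum_primesBelow_mul_rpow {a : ℕ → ℝ} {K K' : ℝ} (hK : K' < K)
    (ha : ∀ᶠ n in atTop, K ≤ ∑ p ∈ Nat.primesBelow n, a p / p) :
    ∀ᶠ s in 𝓝[>] (1 : ℝ), ∀ᶠ n in atTop,
      K' ≤ ∑ p ∈ Nat.primesBelow n, a p * (p : ℝ) ^ (-s) := by
  obtain ⟨N, hN, hN₁⟩ := ((eventually_forall_ge_atTop.2 ha).and (eventually_ge_atTop 1)).exists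
  -- Summation by parts bounds the sums over `p < n` below by `lower s`, uniformly in `n ≥ N`.
  let lower (s : ℝ) : ℝ := ∑ p ∈ Nat.primesBelow N, a p / p * (p : ℝ) ^ (1 - s) +
    (K - ∑ p ∈ Nat.primesBelow N, a p / p) * (N : ℝ) ^ (1 - s)
  have hlower_one : lower 1 = K := by simp [lower]
  have hlower : Continuous lower := by
    have hpow {k : ℕ} (hk : k ≠ 0) : Continuous fun s : ℝ ↦ (k : ℝ) ^ (1 - s) :=
      (Real.continuous_const_rpow (Nat.cast_ne_zero.2 hk)).comp (continuous_sub_left 1)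
    exact (continuous_finsetSum _ fun p hp ↦
        (hpow (Nat.prime_of_mem_primesBelow hp).ne_zero).const_mul _).add
      ((hpow (Nat.one_le_iff_ne_zero.1 hN₁)).const_mul _)
  have hlower_gt : ∀ᶠ s in 𝓝[>] (1 : ℝ), K' < lower s :=
    (hlower.continuousAt.eventually_const_lt (hK.trans_eq hlower_one.symm)).filter_mono
      nhdsWithin_le_nhds
  filter_upwards [hlower_gt, self_mem_nhdsWithin] with s hs (hs₁ : 1 < s)
  filter_upwards [eventually_ge_atTop N] with n hn
  have hterm : ∀ p ∈ Nat.primesBelow n, a p / p * (p : ℝ) ^ (1 - s) = a p * (p : ℝ) ^ (-s) := by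
    intro p hp
    have hp₀ : (p : ℝ) ≠ 0 := Nat.cast_ne_zero.2 (Nat.prime_of_mem_primesBelow hp).ne_zero
    rw [show -s = 1 - s - 1 by ring, Real.rpow_sub_one hp₀]
    ring
  calc K' ≤ lower s := hs.le
    _ ≤ ∑ p ∈ Nat.primesBelow n, a p / p * (p : ℝ) ^ (1 - s) :=
      le_sum_primesBelow_mul_of_antitoneOn
        ((antitoneOn_natCast_rpow (by linarith)).mono (Set.Ici_subset_Ici.2 hN₁))
        (fun k _ ↦ by positivity) hN hn
    _ = ∑ p ∈ Nat.primesBelow n, a p * (p : ℝ) ^ (-s) := Finset.sum_congr rfl hterm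

end Abelian

section Divergence

lemma tendsto_sum_range_atTop_of_eventually_le {u v : ℕ → ℝ} (huv : ∀ᶠ n in atTop, u n ≤ v n)
    (hu : Tendsto (fun n ↦ ∑ k ∈ Finset.range n, u k) atTop atTop) :
    Tendsto (fun n ↦ ∑ k ∈ Finset.range n, v k) atTop atTop := by
  obtain ⟨N, hN⟩ := eventually_atTop.1 huv
  refine tendsto_atTop_mono' atTop ?_
    (tendsto_atTop_add_const_right atTop (∑ k ∈ Finset.range N, (v k - u k)) hu)
  filter_upwards [eventually_ge_atTop N] with n hn
  have htail : ∑ k ∈ Finset.Ico N n, u k ≤ ∑ k ∈ Finset.Ico N n, v k :=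
    Finset.sum_le_sum fun k hk ↦ hN k (Finset.mem_Ico.1 hk).1
  rw [← Finset.sum_range_add_sum_Ico u hn, ← Finset.sum_range_add_sum_Ico v hn,
    Finset.sum_sub_distrib]
  linarith

lemma not_summable_one_div_natCast_mul_log :
    ¬ Summable fun n : ℕ ↦ 1 / ((n : ℝ) * Real.log n) := by
  have hnonneg (n : ℕ) : 0 ≤ 1 / ((n : ℝ) * Real.log n) := by
    have := Real.log_natCast_nonneg n
    positivity
  have hanti : ∀ᶠ n : ℕ in atTop,
      1 / (((n + 1 : ℕ) : ℝ) * Real.log (n + 1 : ℕ)) ≤ 1 / ((n : ℝ) * Real.log n) := by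
    filter_upwards [eventually_ge_atTop 2] with n hn
    have hlog : 0 < Real.log n := Real.log_pos (by exact_mod_cast hn)
    gcongr <;> simp
  have hcondensed (k : ℕ) :
      (2 : ℝ) ^ k * (1 / (((2 ^ k : ℕ) : ℝ) * Real.log (2 ^ k : ℕ))) =
        (Real.log 2)⁻¹ * (1 / (k : ℝ)) := by
    rw [Nat.cast_pow, Nat.cast_ofNat, Real.log_pow]
    field_simp
  rw [← summable_condensed_iff_of_eventually_nonneg (.of_forall hnonneg) hanti]
  simp only [hcondensed, summable_mul_left_iff (inv_ne_zero (Real.log_pos one_lt_two).ne')]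
  exact Real.not_summable_one_div_natCast

lemma tendsto_sum_primesBelow_div_atTop {a : ℕ → ℝ} {δ : ℝ} (hδ : 0 < δ)
    (ha : ∀ᶠ n : ℕ in atTop, δ * (n / Real.log n) ≤ ∑ p ∈ Nat.primesBelow (n + 1), a p) :
    Tendsto (fun n ↦ ∑ p ∈ Nat.primesBelow n, a p / p) atTop atTop := by
  have hmodel : Tendsto
      (fun n ↦ ∑ k ∈ Finset.range n, δ * (1 / (((k + 1 : ℕ) : ℝ) * Real.log (k + 1 : ℕ))))
      atTop atTop := by
    have hdiv := mt (summable_nat_add_iff 1).1 not_summable_one_div_natCast_mul_log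
    rw [← summable_mul_left_iff hδ.ne'] at hdiv
    refine (not_summable_iff_tendsto_nat_atTop_of_nonneg fun k ↦ ?_).1 hdiv
    have := Real.log_natCast_nonneg (k + 1)
    positivity
  have hparts : Tendsto (fun n ↦ ∑ k ∈ Finset.range n,
      (∑ p ∈ Nat.primesBelow (k + 1), a p) / (k * (k + 1))) atTop atTop := by
    refine tendsto_sum_range_atTop_of_eventually_le ?_ hmodel
    filter_upwards [ha, eventually_ge_atTop 2] with k hk hk₂
    have hlog : 0 < Real.log k := Real.log_pos (by exact_mod_cast hk₂)
    calc δ * (1 / (((k + 1 : ℕ) : ℝ) * Real.log (k + 1 : ℕ)))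
        ≤ δ * (1 / ((k + 1 : ℕ) * Real.log k)) := by gcongr; simp
      _ = δ * (k / Real.log k) / (k * (k + 1)) := by push_cast; field_simp
      _ ≤ _ := by gcongr
  rw [← tendsto_add_atTop_iff_nat 1]
  refine tendsto_atTop_mono' atTop ?_ hparts
  filter_upwards [ha] with n hn
  rw [sum_primesBelow_div]
  have := Real.log_natCast_nonneg n
  have : 0 ≤ ∑ p ∈ Nat.primesBelow (n + 1), a p := le_trans (by positivity) hn
  exact le_add_of_nonneg_left (by positivity)

lemma eventually_mul_le_of_isLittleO {α : Type*} {l : Filter α} {u v : α → ℝ} {c c' : ℝ}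
    (hc : c' < c) (hv : ∀ᶠ x in l, 0 ≤ v x) (huv : (fun x ↦ u x - c * v x) =o[l] v) :
    ∀ᶠ x in l, c' * v x ≤ u x := by
  filter_upwards [huv.def (sub_pos.2 hc), hv] with x hx hvx
  rw [Real.norm_of_nonneg hvx, Real.norm_eq_abs] at hx
  linarith [(abs_le.1 hx).1]

end Divergence

section EulerProduct

lemma exp_le_inv_one_sub {x : ℝ} (hx : x < 1) : Real.exp x ≤ (1 - x)⁻¹ := by
  rw [le_inv_comm₀ (Real.exp_pos x) (sub_pos.2 hx), ← Real.exp_neg]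
  exact Real.one_sub_le_exp_neg x

lemma exp_le_tsum_of_eventually_le_sum_primesBelow {g : ℕ →*₀ ℝ} (hg : Summable (‖g ·‖)) {K : ℝ}
    (hK : ∀ᶠ n in atTop, K ≤ ∑ p ∈ Nat.primesBelow n, g p) : Real.exp K ≤ ∑' n, g n := by
  refine ge_of_tendsto (EulerProduct.eulerProduct_completely_multiplicative hg) ?_
  filter_upwards [hK] with n hn
  calc Real.exp K ≤ Real.exp (∑ p ∈ Nat.primesBelow n, g p) := Real.exp_le_exp.2 hn
    _ = ∏ p ∈ Nat.primesBelow n, Real.exp (g p) := Real.exp_sum _ _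
    _ ≤ ∏ p ∈ Nat.primesBelow n, (1 - g p)⁻¹ := by
      gcongr with p hp
      exact exp_le_inv_one_sub <| (le_abs_self _).trans_lt <|
        hg.of_norm.norm_lt_one (f := (g : ℕ →* ℝ)) (Nat.one_lt_of_mem_primesBelow hp)

end EulerProduct

section DirichletSeries

variable (f : ℕ →* ℝ) {s : ℝ}

/-- The summand `n ↦ f n * n ^ (-s)` of the Dirichlet series of a completely multiplicative `f`.
It vanishes at `0`, whatever the value of `f 0`. -/
noncomputable def realDirichletSummandHom (hs : s ≠ 0) : ℕ →*₀ ℝ where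
  toFun n := f n * (n : ℝ) ^ (-s)
  map_zero' := by simp [hs]
  map_one' := by simp
  map_mul' m n := by
    rw [map_mul, Nat.cast_mul, Real.mul_rpow m.cast_nonneg n.cast_nonneg]
    ring

lemma realDirichletSummandHom_apply (hs : s ≠ 0) (n : ℕ) :
    realDirichletSummandHom f hs n = f n * (n : ℝ) ^ (-s) := rfl

variable {f}

lemma summable_norm_realDirichletSummandHom (hf : ∀ n ≠ 0, |f n| ≤ 1) (hs : 1 < s) :
    Summable (‖realDirichletSummandHom f (zero_lt_one.trans hs).ne' ·‖) := by
  refine .of_nonneg_of_le (fun _ ↦ norm_nonneg _) (fun n ↦ ?_)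
    (Real.summable_nat_rpow.2 (neg_lt_neg hs))
  rcases eq_or_ne n 0 with rfl | hn
  · rw [map_zero, norm_zero]
    positivity
  · have hpow : 0 ≤ (n : ℝ) ^ (-s) := by positivity
    rw [realDirichletSummandHom_apply, norm_mul, Real.norm_of_nonneg hpow]
    exact mul_le_of_le_one_left hpow (hf n hn)

lemma tsum_realDirichletSummandHom_le {C : ℝ} (hf : ∀ n ≠ 0, |f n| ≤ 1)
    (hC : ∀ N, ∑ n ∈ Finset.Icc 1 N, f n ≤ C) (hs : 1 < s) :
    ∑' n, realDirichletSummandHom f (zero_lt_one.trans hs).ne' n ≤ C := by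
  refine le_of_tendsto
    (summable_norm_realDirichletSummandHom hf hs).of_norm.hasSum.tendsto_sum_nat ?_
  filter_upwards [eventually_ge_atTop 1] with n hn
  have habel := sum_Ico_mul_le_of_antitoneOn (a := f)
    (antitoneOn_natCast_rpow (r := -s) (by linarith)) (fun k _ ↦ by positivity)
    (fun n hn ↦ by
      obtain ⟨N, rfl⟩ := Nat.exists_eq_add_of_le' hn
      exact hC N) hn
  rw [Finset.range_eq_Ico, Finset.sum_eq_sum_Ico_succ_bot hn, map_zero, zero_add]
  simpa only [realDirichletSummandHom_apply, Nat.cast_one, Real.one_rpow, mul_one] using habel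

lemma exp_le_of_eventually_le_sum_primesBelow_mul_rpow {C K : ℝ} (hf : ∀ n ≠ 0, |f n| ≤ 1)
    (hC : ∀ N, ∑ n ∈ Finset.Icc 1 N, f n ≤ C) (hs : 1 < s)
    (hK : ∀ᶠ n in atTop, K ≤ ∑ p ∈ Nat.primesBelow n, f p * (p : ℝ) ^ (-s)) : Real.exp K ≤ C :=
  (exp_le_tsum_of_eventually_le_sum_primesBelow (summable_norm_realDirichletSummandHom hf hs)
    hK).trans (tsum_realDirichletSummandHom_le hf hC hs)

end DirichletSeries

theorem stmt_9_general (f : ℕ →* ℝ) (hf : ∀ n ≠ 0, |f n| ≤ 1)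
    (hdiv : Tendsto (fun n ↦ ∑ p ∈ Nat.primesBelow n, f p / p) atTop atTop) (C : ℝ) :
    ∃ N : ℕ, C < ∑ n ∈ Finset.Icc 1 N, f n := by
  by_contra! hC
  obtain ⟨s, hsum, hs⟩ := ((eventually_le_sum_primesBelow_mul_rpow (lt_add_one C)
    (hdiv.eventually_ge_atTop (C + 1))).and self_mem_nhdsWithin).exists
  have hexp := exp_le_of_eventually_le_sum_primesBelow_mul_rpow hf hC hs hsum
  linarith [Real.add_one_le_exp C]

/-- If `f` is completely multiplicative with values in `{-1, 1}`, `c ∈ (0, 1]`, and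
`∑_{p ≤ x} f p = c·(x/log x)·(1 + o(1))`, then the partial sums of `f` are unbounded. -/
theorem stmt_9 (f : ℕ → ℤ)
    (hf1 : f 1 = 1)
    (hfmul : ∀ a b : ℕ, f (a * b) = f a * f b)
    (hfpm : ∀ n : ℕ, 1 ≤ n → f n = 1 ∨ f n = -1)
    (c : ℝ) (hc : c ∈ Set.Ioc (0 : ℝ) 1)
    (hasymp : (fun x : ℝ => (∑ p ∈ Nat.primesBelow (⌊x⌋₊ + 1), (f p : ℝ))
        - c * (x / Real.log x)) =o[atTop] (fun x : ℝ => x / Real.log x)) :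
    ∀ C : ℝ, ∃ N : ℕ, C < |((∑ n ∈ Finset.Icc 1 N, f n : ℤ) : ℝ)| := by
  intro C
  let F : ℕ →* ℝ := (Int.castRingHom ℝ : ℤ →* ℝ).comp ⟨⟨f, hf1⟩, hfmul⟩
  have hF : ∀ n ≠ 0, |F n| ≤ 1 := fun n hn ↦ by
    rcases hfpm n (Nat.one_le_iff_ne_zero.2 hn) with h | h <;> simp [F, h]
  have hle : ∀ᶠ n : ℕ in atTop,
      c / 2 * (n / Real.log n) ≤ ∑ p ∈ Nat.primesBelow (n + 1), F p := by
    have hnat := hasymp.comp_tendsto (tendsto_natCast_atTop_atTop (R := ℝ))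
    simp only [Function.comp_def, Nat.floor_natCast] at hnat
    refine eventually_mul_le_of_isLittleO (half_lt_self hc.1) (.of_forall fun n ↦ ?_) hnat
    exact div_nonneg n.cast_nonneg (Real.log_natCast_nonneg n)
  obtain ⟨N, hN⟩ := stmt_9_general F hF (tendsto_sum_primesBelow_div_atTop (half_pos hc.1) hle) C
  refine ⟨N, hN.trans_le ?_⟩
  rw [Int.cast_sum]
  exact le_abs_self _
end

section
/- Let f : ℕ → ℤ be a completely multiplicative function taking values in {-1, 1}, and let c ∈ [-1, 0) be a real number. Suppose ∑_{p ≤ x} f(p) = c·(x/log x)·(1 + o(1)) as x → ∞, the sum running over primes p. Then the partial sums of μ·f are unbounded: lim sup_{N→∞} |∑_{n=1}^{N} μ(n) f(n)| = ∞, where μ is the Möbius function. -/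
open Filter Asymptotics

/-!
Suppose the partial sums of `μ f` are bounded by `C`. Summation by parts bounds
`F s = ∑ μ(n) f(n) n⁻ˢ` by `C` for every real `s > 1`. On the other hand `F s = ∏ (1 - f(p) p⁻ˢ)`,
and `log ‖1 - z‖ = -re z + O(‖z‖²)`, so `-∑ re f(p) p⁻ˢ` is bounded above uniformly in `s > 1`.
If `∑_{p < x} re f(p)` is eventually nonpositive, a second summation by parts shows that the tails
of this series are almost nonnegative; truncating it and letting `s → 1` bounds `-∑ re f(p) / p`
from above. But `∑_{p ≤ x} re f(p) ≤ c x / log x` with `c < 0` makes `-∑_{p < x} re f(p) / p` grow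
at least like `log log x`.
-/

open scoped ArithmeticFunction.Moebius Topology

section SummationByParts

lemma norm_sum_range_smul_le_of_antitone {E : Type*} [SeminormedAddCommGroup E] [NormedSpace ℝ E]
    {w : ℕ → ℝ} {a : ℕ → E} {C : ℝ} (hw : Antitone w) (hw_nonneg : ∀ n, 0 ≤ w n)
    (ha : ∀ n, ‖∑ i ∈ Finset.range n, a i‖ ≤ C) (n : ℕ) :
    ‖∑ i ∈ Finset.range n, w i • a i‖ ≤ C * w 0 := by
  have norm_smul_le {r : ℝ} (hr : 0 ≤ r) (k : ℕ) :
      ‖r • ∑ i ∈ Finset.range k, a i‖ ≤ r * C := by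
    rw [norm_smul, Real.norm_of_nonneg hr]
    exact mul_le_mul_of_nonneg_left (ha k) hr
  have norm_diff_le : ‖∑ i ∈ Finset.range (n - 1),
      (w (i + 1) - w i) • ∑ j ∈ Finset.range (i + 1), a j‖ ≤ (w 0 - w (n - 1)) * C := by
    rw [← Finset.sum_range_sub', Finset.sum_mul]
    refine norm_sum_le_of_le _ fun i _ ↦ ?_
    rw [← neg_sub, neg_smul, norm_neg]
    exact norm_smul_le (sub_nonneg.2 (hw i.le_succ)) _
  rw [Finset.sum_range_by_parts]
  calc _ ≤ w (n - 1) * C + (w 0 - w (n - 1)) * C :=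
        norm_sub_le_of_le (norm_smul_le (hw_nonneg _) n) norm_diff_le
    _ = C * w 0 := by ring

variable {w b : ℕ → ℝ} {m n : ℕ}

lemma sum_Ico_sub_mul_sub_le_sum_Ico_mul (hmn : m ≤ n)
    (h_last : 0 ≤ w n * ∑ i ∈ Finset.range (n + 1), b i) :
    ∑ i ∈ Finset.Ico m n, (w i - w (i + 1)) * ∑ j ∈ Finset.range (i + 1), b j
        - w m * ∑ i ∈ Finset.range m, b i
      ≤ ∑ i ∈ Finset.Ico m (n + 1), w i * b i := by
  have h_parts := Finset.sum_Ico_by_parts w b (Nat.lt_succ_of_le hmn)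
  simp only [smul_eq_mul, Nat.add_sub_cancel, Nat.succ_eq_add_one] at h_parts
  have h_neg : ∑ i ∈ Finset.Ico m n, (w i - w (i + 1)) * ∑ j ∈ Finset.range (i + 1), b j =
      -∑ i ∈ Finset.Ico m n, (w (i + 1) - w i) * ∑ j ∈ Finset.range (i + 1), b j := by
    simp only [← Finset.sum_neg_distrib, ← neg_mul, neg_sub]
  linarith

lemma sum_range_mul_sub_le_of_antitoneOn (hw : AntitoneOn w (Set.Ici m))
    (hw_nonneg : ∀ i ≥ m, 0 ≤ w i) (hb : ∀ k ≥ m, 0 ≤ ∑ i ∈ Finset.range k, b i) (hmn : m < n) :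
    ∑ i ∈ Finset.range m, w i * b i - w m * ∑ i ∈ Finset.range m, b i
      ≤ ∑ i ∈ Finset.range n, w i * b i := by
  obtain ⟨n, rfl⟩ := Nat.exists_eq_add_of_lt hmn
  have h_tail := sum_Ico_sub_mul_sub_le_sum_Ico_mul (m.le_add_right n)
    (mul_nonneg (hw_nonneg (m + n) (by lia)) (hb (m + n + 1) (by lia)))
  have h_diff : 0 ≤ ∑ i ∈ Finset.Ico m (m + n),
      (w i - w (i + 1)) * ∑ j ∈ Finset.range (i + 1), b j := by
    refine Finset.sum_nonneg fun i hi ↦ ?_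
    have hi : m ≤ i := (Finset.mem_Ico.1 hi).1
    have h_succ : m ≤ i + 1 := hi.trans i.le_succ
    exact mul_nonneg (sub_nonneg.2 (hw hi h_succ i.le_succ)) (hb _ h_succ)
  rw [← Finset.sum_range_add_sum_Ico _ hmn.le]
  linarith

end SummationByParts

section LogLog

lemma log_sub_log_le_div {x y : ℝ} (hx : 0 < x) (hy : 0 < y) :
    Real.log y - Real.log x ≤ (y - x) / x := by
  rw [← Real.log_div hy.ne' hx.ne', sub_div, div_self hx.ne']
  exact Real.log_le_sub_one_of_pos (div_pos hy hx)

lemma log_log_add_one_sub_log_log_le {x : ℝ} (hx : 1 < x) :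
    Real.log (Real.log (x + 1)) - Real.log (Real.log x) ≤ 1 / (x * Real.log x) := by
  have h_log : 0 < Real.log x := Real.log_pos hx
  calc _ ≤ (Real.log (x + 1) - Real.log x) / Real.log x :=
        log_sub_log_le_div h_log (Real.log_pos (by linarith))
    _ ≤ (x + 1 - x) / x / Real.log x := by
        gcongr
        exact log_sub_log_le_div (by linarith) (by linarith)
    _ = 1 / (x * Real.log x) := by rw [add_sub_cancel_left, div_div]

lemma log_log_sub_log_log_le_inv_sub_inv_mul {x : ℝ} (hx : 1 < x) :
    Real.log (Real.log (x + 1 + 1)) - Real.log (Real.log (x + 1)) ≤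
      (x⁻¹ - (x + 1)⁻¹) * (x / Real.log x) := by
  have h_log : 0 < Real.log x := Real.log_pos hx
  calc _ ≤ 1 / ((x + 1) * Real.log (x + 1)) := log_log_add_one_sub_log_log_le (by linarith)
    _ ≤ 1 / ((x + 1) * Real.log x) := by gcongr; linarith
    _ = (x⁻¹ - (x + 1)⁻¹) * (x / Real.log x) := by
        field_simp
        ring

lemma mul_log_log_sub_log_log_add_le_sum_div {b : ℕ → ℝ} {δ : ℝ} {m n : ℕ} (hδ : 0 ≤ δ)
    (hm : 2 ≤ m)
    (hb : ∀ k ≥ m, δ * (k / Real.log k) ≤ ∑ i ∈ Finset.range (k + 1), b i) (hmn : m ≤ n) :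
    δ * (Real.log (Real.log (n + 1 : ℕ)) - Real.log (Real.log (m + 1 : ℕ)))
        + (∑ k ∈ Finset.range m, b k / k - (m : ℝ)⁻¹ * ∑ k ∈ Finset.range m, b k)
      ≤ ∑ k ∈ Finset.range (n + 1), b k / k := by
  have increment_le {k : ℕ} (hk : m ≤ k) :
      δ * (Real.log (Real.log (k + 1 + 1 : ℕ)) - Real.log (Real.log (k + 1 : ℕ))) ≤
        ((k : ℝ)⁻¹ - ((k + 1 : ℕ) : ℝ)⁻¹) * ∑ i ∈ Finset.range (k + 1), b i := by
    have hk_two : (2 : ℝ) ≤ k := mod_cast hm.trans hk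
    have h_inv : 0 ≤ (k : ℝ)⁻¹ - ((k + 1 : ℕ) : ℝ)⁻¹ := sub_nonneg.2 (by gcongr; lia)
    have h_loglog := log_log_sub_log_log_le_inv_sub_inv_mul (x := k) (by linarith)
    calc _ ≤ δ * (((k : ℝ)⁻¹ - ((k + 1 : ℕ) : ℝ)⁻¹) * (k / Real.log k)) :=
          mul_le_mul_of_nonneg_left (mod_cast h_loglog) hδ
      _ = ((k : ℝ)⁻¹ - ((k + 1 : ℕ) : ℝ)⁻¹) * (δ * (k / Real.log k)) := mul_left_comm _ _ _
      _ ≤ _ := mul_le_mul_of_nonneg_left (hb k hk) h_inv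
  have h_last : 0 ≤ ∑ i ∈ Finset.range (n + 1), b i := le_trans (by positivity) (hb n hmn)
  have h_parts := sum_Ico_sub_mul_sub_le_sum_Ico_mul (w := fun k ↦ (k : ℝ)⁻¹) hmn
    (mul_nonneg (by positivity) h_last)
  have h_telescope := Finset.sum_le_sum (s := Finset.Ico m n)
    fun k hk ↦ increment_le (Finset.mem_Ico.1 hk).1
  rw [← Finset.mul_sum,
    Finset.sum_Ico_sub (fun k : ℕ ↦ Real.log (Real.log (k + 1 : ℕ))) hmn] at h_telescope
  rw [← Finset.sum_range_add_sum_Ico _ (hmn.trans n.le_succ)]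
  simp only [div_eq_inv_mul]
  linarith

lemma tendsto_sum_div_atTop_of_le_sum {b : ℕ → ℝ} {δ : ℝ} (hδ : 0 < δ)
    (hb : ∀ᶠ n : ℕ in atTop, δ * (n / Real.log n) ≤ ∑ k ∈ Finset.range (n + 1), b k) :
    Tendsto (fun n ↦ ∑ k ∈ Finset.range n, b k / k) atTop atTop := by
  obtain ⟨m, hb, hm⟩ :=
    ((eventually_forall_ge_atTop.2 hb).and (eventually_ge_atTop 2)).exists
  have tendsto_loglog : Tendsto (fun n : ℕ ↦ Real.log (Real.log (n + 1 : ℕ))) atTop atTop :=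
    Real.tendsto_log_atTop.comp <| Real.tendsto_log_atTop.comp <|
      tendsto_natCast_atTop_atTop.comp (tendsto_add_atTop_nat 1)
  refine (tendsto_add_atTop_iff_nat 1).1 (tendsto_atTop_mono' _ ((eventually_ge_atTop m).mono
    fun n ↦ mul_log_log_sub_log_log_add_le_sum_div hδ.le hm hb)
      (tendsto_atTop_add_const_right _ _ ?_))
  exact (tendsto_atTop_add_const_right _ _ tendsto_loglog).const_mul_atTop hδ

end LogLog

section DirichletSeries

lemma norm_tsum_rpow_smul_le {E : Type*} [NormedAddCommGroup E] [NormedSpace ℝ E]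
    {a : ℕ → E} {C s : ℝ} (hs : 0 < s) (ha : ∀ N, ‖∑ n ∈ Finset.Icc 1 N, a n‖ ≤ C)
    (h_summable : Summable fun n : ℕ ↦ (n : ℝ) ^ (-s) • a n) :
    ‖∑' n : ℕ, (n : ℝ) ^ (-s) • a n‖ ≤ C := by
  have h_shift : ∑' n : ℕ, (n : ℝ) ^ (-s) • a n =
      ∑' n : ℕ, ((n + 1 : ℕ) : ℝ) ^ (-s) • a (n + 1) := by
    rw [h_summable.tsum_eq_zero_add, Nat.cast_zero, Real.zero_rpow (by linarith), zero_smul,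
      zero_add]
  have h_antitone : Antitone fun n : ℕ ↦ ((n + 1 : ℕ) : ℝ) ^ (-s) := fun m n hmn ↦
    Real.rpow_le_rpow_of_nonpos (by positivity) (by gcongr) (by linarith)
  have h_partial (N : ℕ) : ‖∑ n ∈ Finset.range N, a (n + 1)‖ ≤ C := by
    rw [Finset.range_eq_Ico, Finset.sum_Ico_add' a 0 N 1, zero_add,
      Finset.Ico_add_one_right_eq_Icc]
    exact ha N
  rw [h_shift]
  refine le_of_tendsto
    ((summable_nat_add_iff 1).2 h_summable).hasSum.tendsto_sum_nat.norm (.of_forall fun N ↦ ?_)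
  simpa using norm_sum_range_smul_le_of_antitone h_antitone (fun n ↦ by positivity) h_partial N

lemma summable_norm_rpow_smul_moebius_mul {f : ℕ → ℂ} {s : ℝ} (hf : ∀ n ≠ 0, ‖f n‖ ≤ 1)
    (hs : 1 < s) :
    Summable fun n : ℕ ↦ ‖(n : ℝ) ^ (-s) • ((μ n : ℂ) * f n)‖ := by
  refine (Real.summable_nat_rpow.2 (neg_lt_neg hs)).of_nonneg_of_le (fun n ↦ norm_nonneg _)
    fun n ↦ ?_
  have h_coeff : ‖(μ n : ℂ) * f n‖ ≤ 1 := by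
    rcases eq_or_ne n 0 with rfl | hn
    · simp
    · rw [norm_mul]
      refine mul_le_one₀ ?_ (norm_nonneg _) (hf n hn)
      rw [Complex.norm_intCast]
      exact_mod_cast ArithmeticFunction.abs_moebius_le_one
  rw [norm_smul, Real.norm_of_nonneg (by positivity)]
  exact mul_le_of_le_one_right (by positivity) h_coeff

end DirichletSeries

section EulerProduct

variable {f : ℕ → ℂ} {s : ℝ}

lemma tendsto_prod_primesBelow_one_sub (hf_one : f 1 = 1)
    (hf_mul : ∀ {m n : ℕ}, m.Coprime n → f (m * n) = f m * f n) (hf : ∀ n ≠ 0, ‖f n‖ ≤ 1)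
    (hs : 1 < s) :
    Tendsto (fun N : ℕ ↦ ∏ p ∈ N.primesBelow, (1 - (p : ℝ) ^ (-s) • f p)) atTop
      (𝓝 (∑' n : ℕ, (n : ℝ) ^ (-s) • ((μ n : ℂ) * f n))) := by
  have h_mul {m n : ℕ} (hmn : m.Coprime n) :
      ((m * n : ℕ) : ℝ) ^ (-s) • ((μ (m * n) : ℂ) * f (m * n)) =
      ((m : ℝ) ^ (-s) • ((μ m : ℂ) * f m)) *
        ((n : ℝ) ^ (-s) • ((μ n : ℂ) * f n)) := by
    rw [ArithmeticFunction.isMultiplicative_moebius.map_mul_of_coprime hmn, hf_mul hmn,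
      Nat.cast_mul, Real.mul_rpow (by positivity) (by positivity), smul_mul_smul_comm]
    push_cast
    ring_nf
  refine (EulerProduct.eulerProduct (by simp [hf_one]) h_mul
    (summable_norm_rpow_smul_moebius_mul hf hs) (by simp)).congr fun N ↦
      Finset.prod_congr rfl fun p hp ↦ ?_
  have hp : p.Prime := Nat.prime_of_mem_primesBelow hp
  rw [tsum_eq_sum (s := Finset.range 2)]
  · simp [Finset.sum_range_succ, hf_one, ArithmeticFunction.moebius_apply_prime hp,
      sub_eq_add_neg]
  · intro e he
    have he : 2 ≤ e := not_lt.1 (mt Finset.mem_range.2 he)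
    rw [ArithmeticFunction.moebius_apply_prime_pow hp (by lia), if_neg (by lia)]
    simp

lemma exp_neg_re_sub_sq_le_norm_one_sub {z : ℂ} (hz : ‖z‖ ≤ 1 / 2) :
    Real.exp (-z.re - ‖z‖ ^ 2) ≤ ‖1 - z‖ := by
  have h_ne : 1 - z ≠ 0 := sub_ne_zero.2 fun h ↦ by norm_num [← h] at hz
  have h_inv : (1 - ‖z‖)⁻¹ ≤ 2 := inv_le_of_inv_le₀ two_pos (by linarith)
  have h_log : ‖Complex.log (1 - z) + z‖ ≤ ‖z‖ ^ 2 := by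
    have h := Complex.norm_log_one_add_sub_self_le (z := -z) (by rw [norm_neg]; linarith)
    rw [norm_neg, ← sub_eq_add_neg, sub_neg_eq_add] at h
    nlinarith [mul_le_mul_of_nonneg_left h_inv (sq_nonneg ‖z‖)]
  have h_re := (abs_le.1 ((Complex.abs_re_le_norm _).trans h_log)).1
  rw [Complex.add_re, Complex.log_re] at h_re
  rw [← Real.le_log_iff_exp_le (norm_pos_iff.2 h_ne)]
  linarith

lemma exp_le_norm_prod_primesBelow_one_sub (hf : ∀ p, p.Prime → ‖f p‖ ≤ 1)
    (hs : 1 ≤ s) (N : ℕ) :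
    Real.exp (-∑ p ∈ N.primesBelow, (p : ℝ) ^ (-s) * (f p).re - ∑' n : ℕ, (n : ℝ) ^ (-2 : ℝ)) ≤
      ‖∏ p ∈ N.primesBelow, (1 - (p : ℝ) ^ (-s) • f p)‖ := by
  have norm_term_le {p : ℕ} (hp : p ∈ N.primesBelow) :
      ‖(p : ℝ) ^ (-s) • f p‖ ≤ (p : ℝ) ^ (-1 : ℝ) := by
    have hp : p.Prime := Nat.prime_of_mem_primesBelow hp
    rw [norm_smul, Real.norm_of_nonneg (by positivity)]
    exact (mul_le_of_le_one_right (by positivity) (hf p hp)).trans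
      (Real.rpow_le_rpow_of_exponent_le (mod_cast hp.one_le) (by linarith))
  have sum_sq_le : ∑ p ∈ N.primesBelow, ‖(p : ℝ) ^ (-s) • f p‖ ^ 2 ≤
      ∑' n : ℕ, (n : ℝ) ^ (-2 : ℝ) := by
    refine (Finset.sum_le_sum fun p hp ↦ ?_).trans
      ((Real.summable_nat_rpow.2 (by norm_num)).sum_le_tsum _ fun n _ ↦ by positivity)
    calc _ ≤ ((p : ℝ) ^ (-1 : ℝ)) ^ 2 := by gcongr; exact norm_term_le hp
      _ = (p : ℝ) ^ (-2 : ℝ) := by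
          rw [← Real.rpow_natCast, ← Real.rpow_mul (by positivity)]
          norm_num
  calc _ ≤ Real.exp (∑ p ∈ N.primesBelow,
          (-((p : ℝ) ^ (-s) • f p).re - ‖(p : ℝ) ^ (-s) • f p‖ ^ 2)) := by
        simp only [Complex.smul_re, smul_eq_mul, Finset.sum_sub_distrib, Finset.sum_neg_distrib]
        gcongr
    _ ≤ ‖∏ p ∈ N.primesBelow, (1 - (p : ℝ) ^ (-s) • f p)‖ := by
        rw [Real.exp_sum, norm_prod]
        refine Finset.prod_le_prod (fun p _ ↦ (Real.exp_pos _).le) fun p hp ↦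
          exp_neg_re_sub_sq_le_norm_one_sub ((norm_term_le hp).trans ?_)
        rw [Real.rpow_neg_one, one_div]
        gcongr
        exact_mod_cast (Nat.prime_of_mem_primesBelow hp).two_le

end EulerProduct

section BoundedPartialSums

variable {f : ℕ → ℂ} {C : ℝ}

lemma exp_le_of_norm_sum_moebius_mul_le {s L : ℝ} (hf_one : f 1 = 1)
    (hf_mul : ∀ {m n : ℕ}, m.Coprime n → f (m * n) = f m * f n) (hf : ∀ n ≠ 0, ‖f n‖ ≤ 1)
    (hC : ∀ N, ‖∑ n ∈ Finset.Icc 1 N, (μ n : ℂ) * f n‖ ≤ C)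
    (hs : 1 < s)
    (hL : ∀ᶠ N : ℕ in atTop, L ≤ -∑ p ∈ N.primesBelow, (p : ℝ) ^ (-s) * (f p).re) :
    Real.exp (L - ∑' n : ℕ, (n : ℝ) ^ (-2 : ℝ)) ≤ C := by
  refine le_trans ?_ (norm_tsum_rpow_smul_le (zero_lt_one.trans hs) hC
    (summable_norm_rpow_smul_moebius_mul hf hs).of_norm)
  refine ge_of_tendsto (tendsto_prod_primesBelow_one_sub hf_one hf_mul hf hs).norm ?_
  filter_upwards [hL] with N hN
  refine le_trans ?_ (exp_le_norm_prod_primesBelow_one_sub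
    (fun p hp ↦ hf p hp.ne_zero) hs.le N)
  gcongr

lemma neg_natCast_le_sum_primesBelow_re (hf : ∀ p, p.Prime → ‖f p‖ ≤ 1) (N : ℕ) :
    -(N : ℝ) ≤ ∑ p ∈ N.primesBelow, (f p).re := by
  have h_sum := Finset.card_nsmul_le_sum N.primesBelow (fun p ↦ (f p).re) (-1) fun p hp ↦
    (abs_le.1 ((Complex.abs_re_le_norm _).trans
      (hf p (Nat.prime_of_mem_primesBelow hp)))).1
  have h_card : (N.primesBelow.card : ℝ) ≤ N :=
    mod_cast (Finset.card_filter_le _ _).trans_eq (Finset.card_range N)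
  rw [nsmul_eq_mul] at h_sum
  linarith

lemma sum_primesBelow_rpow_mul_le {g : ℕ → ℝ} {s : ℝ} {M N : ℕ} (hs : 0 ≤ s) (hM : M ≠ 0)
    (hg : ∀ k ≥ M, ∑ p ∈ k.primesBelow, g p ≤ 0) (hMN : M < N) :
    ∑ p ∈ N.primesBelow, (p : ℝ) ^ (-s) * g p ≤
      ∑ p ∈ M.primesBelow, (p : ℝ) ^ (-s) * g p - (M : ℝ) ^ (-s) * ∑ p ∈ M.primesBelow, g p := by
  have h_antitone : AntitoneOn (fun k : ℕ ↦ (k : ℝ) ^ (-s)) (Set.Ici M) := fun i hi j _ hij ↦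
    Real.rpow_le_rpow_of_nonpos (mod_cast (Nat.pos_of_ne_zero hM).trans_le hi)
      (mod_cast hij) (neg_nonpos.2 hs)
  have h_parts := sum_range_mul_sub_le_of_antitoneOn (b := fun k ↦ if k.Prime then -g k else 0)
    h_antitone (fun k _ ↦ by positivity)
    (fun k hk ↦ by
      rw [← Finset.sum_filter, Finset.sum_neg_distrib]
      exact neg_nonneg.2 (hg k hk)) hMN
  simp only [mul_ite, mul_zero, ← Finset.sum_filter, mul_neg, Finset.sum_neg_distrib] at h_parts
  simp only [Nat.primesBelow]
  linarith

lemma exp_neg_sum_primesBelow_div_le_of_norm_sum_moebius_mul_le (hf_one : f 1 = 1)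
    (hf_mul : ∀ {m n : ℕ}, m.Coprime n → f (m * n) = f m * f n) (hf : ∀ n ≠ 0, ‖f n‖ ≤ 1)
    (hC : ∀ N, ‖∑ n ∈ Finset.Icc 1 N, (μ n : ℂ) * f n‖ ≤ C)
    {M : ℕ} (hM : M ≠ 0) (h_nonpos : ∀ k ≥ M, ∑ p ∈ k.primesBelow, (f p).re ≤ 0) :
    Real.exp (-∑ p ∈ M.primesBelow, (f p).re / p - 1 - ∑' n : ℕ, (n : ℝ) ^ (-2 : ℝ)) ≤ C := by
  set L : ℝ → ℝ := fun s ↦ -(∑ p ∈ M.primesBelow, (p : ℝ) ^ (-s) * (f p).re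
    - (M : ℝ) ^ (-s) * ∑ p ∈ M.primesBelow, (f p).re) with hL
  have continuous_rpow_neg {k : ℕ} (hk : k ≠ 0) : Continuous fun s : ℝ ↦ (k : ℝ) ^ (-s) :=
    (Real.continuous_const_rpow (Nat.cast_ne_zero.2 hk)).comp continuous_neg
  have continuous_L : Continuous L :=
    ((continuous_finsetSum _ fun p hp ↦ (continuous_rpow_neg
      (Nat.prime_of_mem_primesBelow hp).ne_zero).mul_const _).sub
        ((continuous_rpow_neg hM).mul_const _)).neg
  have exp_L_one_le : Real.exp (L 1 - ∑' n : ℕ, (n : ℝ) ^ (-2 : ℝ)) ≤ C := by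
    refine le_of_tendsto (x := 𝓝[>] 1) (continuous_L.sub
      continuous_const).rexp.continuousWithinAt.tendsto ?_
    filter_upwards [self_mem_nhdsWithin] with s (hs : 1 < s)
    refine exp_le_of_norm_sum_moebius_mul_le hf_one hf_mul hf hC hs ?_
    filter_upwards [eventually_gt_atTop M] with N hN
    exact neg_le_neg (sum_primesBelow_rpow_mul_le (by linarith) hM h_nonpos hN)
  have boundary_ge : -1 ≤ (M : ℝ)⁻¹ * ∑ p ∈ M.primesBelow, (f p).re := by
    have h_ge := neg_natCast_le_sum_primesBelow_re (fun p hp ↦ hf p hp.ne_zero) M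
    rw [inv_mul_eq_div, le_div_iff₀ (by positivity)]
    linarith
  refine le_trans (Real.exp_le_exp.2 ?_) exp_L_one_le
  simp only [hL, Real.rpow_neg_one, div_eq_inv_mul]
  linarith

theorem exists_lt_norm_sum_moebius_mul_of_tendsto_atBot (hf_one : f 1 = 1)
    (hf_mul : ∀ {m n : ℕ}, m.Coprime n → f (m * n) = f m * f n) (hf : ∀ n ≠ 0, ‖f n‖ ≤ 1)
    (h_nonpos : ∀ᶠ n : ℕ in atTop, ∑ p ∈ n.primesBelow, (f p).re ≤ 0)
    (h_tendsto : Tendsto (fun n : ℕ ↦ ∑ p ∈ n.primesBelow, (f p).re / p) atTop atBot) (C : ℝ) :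
    ∃ N : ℕ, C < ‖∑ n ∈ Finset.Icc 1 N, (μ n : ℂ) * f n‖ := by
  by_contra! hC
  obtain ⟨M, h_lt, hM, h_nonpos⟩ := ((h_tendsto.eventually_lt_atBot
    (-(C + 1 + ∑' n : ℕ, (n : ℝ) ^ (-2 : ℝ)))).and
      ((eventually_ne_atTop 0).and (eventually_forall_ge_atTop.2 h_nonpos))).exists
  have h_exp := exp_neg_sum_primesBelow_div_le_of_norm_sum_moebius_mul_le
    hf_one hf_mul hf hC hM h_nonpos
  linarith [(lt_add_one _).trans_le (Real.add_one_le_exp _) |>.trans_le h_exp]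

end BoundedPartialSums

lemma eventually_sum_primesBelow_le_of_isLittleO {g : ℕ → ℝ} {c c' : ℝ} (hc : c < c')
    (hg : (fun x : ℝ ↦ ∑ p ∈ (⌊x⌋₊ + 1).primesBelow, g p - c * (x / Real.log x))
      =o[atTop] fun x ↦ x / Real.log x) :
    ∀ᶠ n : ℕ in atTop, ∑ p ∈ (n + 1).primesBelow, g p ≤ c' * (n / Real.log n) := by
  filter_upwards [tendsto_natCast_atTop_atTop.eventually (hg.def (sub_pos.2 hc))] with n hn
  rw [Nat.floor_natCast, Real.norm_of_nonneg (by positivity : 0 ≤ n / Real.log n)] at hn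
  linarith [(le_abs_self _).trans hn]

theorem stmt_10_general {f : ℕ → ℂ} (hf_one : f 1 = 1)
    (hf_mul : ∀ {m n : ℕ}, m.Coprime n → f (m * n) = f m * f n) (hf : ∀ n ≠ 0, ‖f n‖ ≤ 1)
    {c : ℝ} (hc : c < 0)
    (h_le : ∀ᶠ n : ℕ in atTop,
      ∑ p ∈ (n + 1).primesBelow, (f p).re ≤ c * (n / Real.log n)) (C : ℝ) :
    ∃ N : ℕ, C < ‖∑ n ∈ Finset.Icc 1 N, (μ n : ℂ) * f n‖ := by
  have h_nonpos : ∀ᶠ n : ℕ in atTop, ∑ p ∈ n.primesBelow, (f p).re ≤ 0 := by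
    rw [← map_add_atTop_eq_nat 1, eventually_map]
    filter_upwards [h_le] with n hn
    exact hn.trans (mul_nonpos_of_nonpos_of_nonneg hc.le (by positivity))
  refine exists_lt_norm_sum_moebius_mul_of_tendsto_atBot hf_one hf_mul hf h_nonpos ?_ C
  rw [← tendsto_neg_atTop_iff]
  have h_tendsto := tendsto_sum_div_atTop_of_le_sum (neg_pos.2 hc)
    (b := fun k ↦ if k.Prime then -(f k).re else 0) (by
      filter_upwards [h_le] with n hn
      rw [← Finset.sum_filter, Finset.sum_neg_distrib, neg_mul]
      exact neg_le_neg hn)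
  simpa only [ite_div, zero_div, neg_div, ← Finset.sum_filter, Finset.sum_neg_distrib,
    Nat.primesBelow] using h_tendsto

/-- If `f` is completely multiplicative with values in `{-1, 1}`, `c ∈ [-1, 0)`, and
`∑_{p ≤ x} f p = c·(x/log x)·(1 + o(1))`, then the partial sums of `μ·f` are unbounded. -/
theorem stmt_10 (f : ℕ → ℤ)
    (hf1 : f 1 = 1)
    (hfmul : ∀ a b : ℕ, f (a * b) = f a * f b)
    (hfpm : ∀ n : ℕ, 1 ≤ n → f n = 1 ∨ f n = -1)
    (c : ℝ) (hc : c ∈ Set.Ico (-1 : ℝ) 0)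
    (hasymp : (fun x : ℝ => (∑ p ∈ Nat.primesBelow (⌊x⌋₊ + 1), (f p : ℝ))
        - c * (x / Real.log x)) =o[atTop] (fun x : ℝ => x / Real.log x)) :
    ∀ C : ℝ, ∃ N : ℕ,
      C < |((∑ n ∈ Finset.Icc 1 N, ArithmeticFunction.moebius n * f n : ℤ) : ℝ)| := by
  have hf_norm (n : ℕ) (hn : n ≠ 0) : ‖(f n : ℂ)‖ ≤ 1 := by
    rcases hfpm n (Nat.one_le_iff_ne_zero.2 hn) with h | h <;> simp [h]
  have h_le := eventually_sum_primesBelow_le_of_isLittleO (by linarith [hc.2] : c < c / 2) hasymp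
  exact_mod_cast stmt_10_general (f := fun n ↦ f n) (mod_cast hf1)
    (fun _ ↦ mod_cast hfmul _ _) hf_norm (by linarith [hc.2]) (mod_cast h_le)
end

section
/- Let f : ℕ → ℤ be a multiplicative function taking values in {-1, 1} such that f(2^k) = 1 for some integer k ≥ 1, and let c ∈ [-1, 0) be a real number. Suppose ∑_{p ≤ x} f(p) = c·(x/log x)·(1 + o(1)) as x → ∞, the sum running over primes p. Then the partial sums of μ·f are unbounded: lim sup_{N→∞} |∑_{n=1}^{N} μ(n) f(n)| = ∞, where μ is the Möbius function. -/
open Filter Asymptotics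

/-!
For a multiplicative `g` supported on squarefree numbers with `|g p| ≤ 1`, the Euler product gives,
for `s > 1`,
`∑ g(n) n^(-s) = ∏ (1 + g(p) p^(-s)) ≥ exp (∑ g(p) p^(-s) - O(1))`.
Take `g = μ f`. By Chebyshev's upper bound for `π`, the hypothesis on `f` yields `δ > 0` such that
the sums of `g(p) - δ` over `p ≤ N` are bounded below, so summation by parts gives
`∑ g(p) p^(-s) ≥ δ ∑ p^(-s) - O(1)`, which tends to infinity as `s → 1⁺`. If the partial sums of `g`
were bounded above by `C`, summation by parts would also give `∑ g(n) n^(-s) ≤ C` for all `s > 1`.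
-/

open ArithmeticFunction Topology

section SummationByParts

lemma sum_Icc_one_mul_le_of_antitoneOn {a w : ℕ → ℝ} {C : ℝ}
    (ha : ∀ N, ∑ n ∈ Finset.Icc 1 N, a n ≤ C) (hw : AntitoneOn w (Set.Ici 1))
    (hw_nonneg : ∀ n, 0 ≤ w n) (N : ℕ) :
    ∑ n ∈ Finset.Icc 1 N, a n * w n ≤ C * w 1 := by
  have hC : 0 ≤ C := by simpa using ha 0
  -- The slack `(C - A(N)) w(N)` left over by the partial sum `A(N)` makes the induction go through.
  suffices strong : ∀ N, ∑ n ∈ Finset.Icc 1 (N + 1), a n * w n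
      ≤ C * w 1 - (C - ∑ n ∈ Finset.Icc 1 (N + 1), a n) * w (N + 1) by
    cases N with
    | zero => simpa using mul_nonneg hC (hw_nonneg 1)
    | succ N =>
      have slack := mul_nonneg (sub_nonneg.2 (ha (N + 1))) (hw_nonneg (N + 1))
      linarith [strong N]
  intro N
  induction N with
  | zero => simp [sub_mul]
  | succ N ih =>
    have hstep : w (N + 2) ≤ w (N + 1) := hw (by simp) (by simp) (Nat.le_succ _)
    have slack := mul_le_mul_of_nonneg_left hstep (sub_nonneg.2 (ha (N + 1)))
    have hlast (u : ℕ → ℝ) : ∑ n ∈ Finset.Icc 1 (N + 2), u n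
        = ∑ n ∈ Finset.Icc 1 (N + 1), u n + u (N + 2) := Finset.sum_Icc_succ_top (by omega) u
    rw [hlast, hlast]
    linarith

lemma sum_range_succ_eq_add_sum_Icc_one (u : ℕ → ℝ) (N : ℕ) :
    ∑ n ∈ Finset.range (N + 1), u n = u 0 + ∑ n ∈ Finset.Icc 1 N, u n := by
  rw [Nat.range_succ_eq_Icc_zero, ← Finset.add_sum_Ioc_eq_sum_Icc N.zero_le]
  rfl

lemma tsum_mul_rpow_neg_le {a : ℕ → ℝ} {C s : ℝ} (hs : 0 < s)
    (ha : ∀ N, ∑ n ∈ Finset.Icc 1 N, a n ≤ C)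
    (hsum : Summable fun n : ℕ ↦ a n * (n : ℝ) ^ (-s)) :
    ∑' n : ℕ, a n * (n : ℝ) ^ (-s) ≤ C := by
  have hanti : AntitoneOn (fun n : ℕ ↦ (n : ℝ) ^ (-s)) (Set.Ici 1) := fun m hm n _ hmn ↦
    Real.rpow_le_rpow_of_nonpos (by exact_mod_cast hm) (by exact_mod_cast hmn) (by linarith)
  have hpartial (N : ℕ) : ∑ n ∈ Finset.range (N + 1), a n * (n : ℝ) ^ (-s) ≤ C := by
    rw [sum_range_succ_eq_add_sum_Icc_one]
    simpa [Real.zero_rpow (neg_ne_zero.2 hs.ne')] using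
      sum_Icc_one_mul_le_of_antitoneOn ha hanti (fun n ↦ by positivity) N
  exact le_of_tendsto' ((tendsto_add_atTop_iff_nat 1).2 hsum.hasSum.tendsto_sum_nat) hpartial

lemma tsum_primes_mul_rpow_neg_le {a : ℕ → ℝ} {C s : ℝ} (hs : 0 < s)
    (ha : ∀ N, ∑ p ∈ Nat.primesBelow (N + 1), a p ≤ C)
    (hsum : Summable fun p : Nat.Primes ↦ a p * (p : ℝ) ^ (-s)) :
    ∑' p : Nat.Primes, a p * (p : ℝ) ^ (-s) ≤ C := by
  let b : ℕ → ℝ := {p : ℕ | p.Prime}.indicator a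
  have hb_mul : {p : ℕ | p.Prime}.indicator (fun n ↦ a n * (n : ℝ) ^ (-s))
      = fun n ↦ b n * (n : ℝ) ^ (-s) := funext fun _ ↦ Set.indicator_mul_left _ _ _
  have hb (N : ℕ) : ∑ n ∈ Finset.Icc 1 N, b n ≤ C := by
    have hprimes := ha N
    rw [Nat.primesBelow, Finset.sum_filter, sum_range_succ_eq_add_sum_Icc_one] at hprimes
    simpa [b, Set.indicator_apply, Nat.not_prime_zero] using hprimes
  have hb_sum : Summable fun n : ℕ ↦ b n * (n : ℝ) ^ (-s) :=
    hb_mul ▸ (summable_subtype_iff_indicator (s := {p : ℕ | p.Prime})).1 hsum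
  calc ∑' p : Nat.Primes, a p * (p : ℝ) ^ (-s)
      = ∑' n : ℕ, b n * (n : ℝ) ^ (-s) :=
        (tsum_subtype {p : ℕ | p.Prime} fun n ↦ a n * (n : ℝ) ^ (-s)).trans (by rw [hb_mul])
    _ ≤ C := tsum_mul_rpow_neg_le hs hb hb_sum

end SummationByParts

lemma tendsto_tsum_primes_rpow_neg_nhdsGT_one :
    Tendsto (fun s : ℝ ↦ ∑' p : Nat.Primes, (p : ℝ) ^ (-s)) (𝓝[>] 1) atTop := by
  refine tendsto_atTop.2 fun B ↦ ?_
  have hdiv : ¬ Summable fun p : Nat.Primes ↦ (p : ℝ) ^ (-1 : ℝ) := by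
    simp [Nat.Primes.summable_rpow]
  obtain ⟨t, ht⟩ : ∃ t : Finset Nat.Primes, B < ∑ p ∈ t, (p : ℝ) ^ (-1 : ℝ) := by
    by_contra! hB
    exact hdiv (summable_of_sum_le (fun p ↦ by positivity) hB)
  have hcont : ContinuousAt (fun s : ℝ ↦ ∑ p ∈ t, (p : ℝ) ^ (-s)) 1 :=
    tendsto_finsetSum _ fun p _ ↦ continuousAt_const.rpow continuousAt_neg
      (Or.inl (Nat.cast_ne_zero.2 p.2.ne_zero))
  filter_upwards [nhdsWithin_le_nhds (hcont.eventually_const_lt ht), self_mem_nhdsWithin]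
    with s hBs hs
  have hsum := Nat.Primes.summable_rpow.2 (neg_lt_neg (Set.mem_Ioi.1 hs))
  exact hBs.le.trans (hsum.sum_le_tsum t fun p _ ↦ by positivity)

lemma exp_sub_two_mul_sq_le_one_add {x : ℝ} (hx : -(1 / 2) ≤ x) :
    Real.exp (x - 2 * x ^ 2) ≤ 1 + x := by
  have hpos : 0 < 1 + x := by linarith
  rw [← Real.le_log_iff_exp_le hpos]
  refine le_trans ?_ (Real.one_sub_inv_le_log_of_pos hpos)
  have hdiff : 1 - (1 + x)⁻¹ - (x - 2 * x ^ 2) = x ^ 2 * (1 + 2 * x) / (1 + x) := by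
    field_simp
    ring
  have hnonneg : 0 ≤ x ^ 2 * (1 + 2 * x) / (1 + x) :=
    div_nonneg (mul_nonneg (sq_nonneg x) (by linarith)) hpos.le
  linarith

section SquarefreeSupport

lemma abs_le_one_of_abs_primes_le_one {g : ArithmeticFunction ℝ} (hg : g.IsMultiplicative)
    (hsupp : ∀ n, ¬ Squarefree n → g n = 0) (hprime : ∀ p : ℕ, p.Prime → |g p| ≤ 1) (n : ℕ) :
    |g n| ≤ 1 := by
  induction n using Nat.recOnPosPrimePosCoprime with
  | zero => simp
  | one => simp [hg.map_one]
  | prime_pow p k hp hk =>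
    by_cases hsq : Squarefree (p ^ k)
    · obtain rfl : k = 1 := ((Nat.squarefree_pow_iff hp.ne_one hk.ne').1 hsq).2
      simpa using hprime p hp
    · simp [hsupp _ hsq]
  | coprime a b _ _ hab iha ihb =>
    rw [hg.map_mul_of_coprime hab, abs_mul]
    exact mul_le_one₀ iha (abs_nonneg _) ihb

lemma tsum_prime_pow_eq_one_add {F : ArithmeticFunction ℝ} (hF : F.IsMultiplicative)
    (hsupp : ∀ n, ¬ Squarefree n → F n = 0) {p : ℕ} (hp : p.Prime) :
    ∑' e : ℕ, F (p ^ e) = 1 + F p := by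
  rw [tsum_eq_sum (s := Finset.range 2)]
  · simp [Finset.sum_range_succ, hF.map_one]
  · intro e he
    have he2 : 1 < e := by simpa using he
    exact hsupp _ fun hsq ↦ he2.ne' ((Nat.squarefree_pow_iff hp.ne_one (by omega)).1 hsq).2

lemma exp_tsum_primes_le_tsum {F : ArithmeticFunction ℝ} (hF : F.IsMultiplicative)
    (hsupp : ∀ n, ¬ Squarefree n → F n = 0) (hprime : ∀ p : ℕ, p.Prime → -(1 / 2) ≤ F p)
    (hsum : Summable F) (hsum_sq : Summable fun p : Nat.Primes ↦ F p ^ 2) :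
    Real.exp (∑' p : Nat.Primes, F p - 2 * ∑' p : Nat.Primes, F p ^ 2) ≤ ∑' n, F n := by
  have hexp : HasProd (fun p : Nat.Primes ↦ Real.exp (F p - 2 * F p ^ 2))
      (Real.exp (∑' p : Nat.Primes, F p - 2 * ∑' p : Nat.Primes, F p ^ 2)) :=
    ((hsum.subtype _).hasSum.sub (hsum_sq.hasSum.mul_left 2)).rexp
  refine le_of_tendsto_of_tendsto' hexp (hF.eulerProduct_hasProd hsum.norm) fun t ↦ ?_
  refine Finset.prod_le_prod (fun _ _ ↦ (Real.exp_pos _).le) fun p _ ↦ ?_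
  rw [tsum_prime_pow_eq_one_add hF hsupp p.2]
  exact exp_sub_two_mul_sq_le_one_add (hprime p p.2)

end SquarefreeSupport

/-- The function `n ↦ g(n) n^(-s)`, whose sum is the Dirichlet series of `g` at `s`. It is
bundled as an arithmetic function so that the Euler product applies to it. -/
noncomputable def dirichletTerm (g : ArithmeticFunction ℝ) (s : ℝ) : ArithmeticFunction ℝ :=
  ⟨fun n ↦ g n * (n : ℝ) ^ (-s), by simp⟩

section DirichletTerm

variable {g : ArithmeticFunction ℝ} {s : ℝ}

lemma dirichletTerm_apply (n : ℕ) : dirichletTerm g s n = g n * (n : ℝ) ^ (-s) := rfl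

lemma isMultiplicative_dirichletTerm (hg : g.IsMultiplicative) :
    (dirichletTerm g s).IsMultiplicative := by
  refine ⟨by simp [dirichletTerm_apply, hg.map_one], fun {m n} hmn ↦ ?_⟩
  simp only [dirichletTerm_apply, hg.map_mul_of_coprime hmn, Nat.cast_mul,
    Real.mul_rpow (Nat.cast_nonneg m) (Nat.cast_nonneg n)]
  ring

lemma abs_dirichletTerm_le {n : ℕ} (hg : |g n| ≤ 1) : |dirichletTerm g s n| ≤ (n : ℝ) ^ (-s) := by
  have hpow : 0 ≤ (n : ℝ) ^ (-s) := by positivity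
  rw [dirichletTerm_apply, abs_mul, abs_of_nonneg hpow]
  exact mul_le_of_le_one_left hpow hg

lemma abs_dirichletTerm_le_inv (hs : 1 < s) {n : ℕ} (hg : |g n| ≤ 1) :
    |dirichletTerm g s n| ≤ (n : ℝ)⁻¹ := by
  rcases n.eq_zero_or_pos with rfl | hn
  · simp
  calc |dirichletTerm g s n| ≤ (n : ℝ) ^ (-s) := abs_dirichletTerm_le hg
    _ ≤ (n : ℝ) ^ (-1 : ℝ) :=
      Real.rpow_le_rpow_of_exponent_le (by exact_mod_cast hn) (by linarith)
    _ = (n : ℝ)⁻¹ := Real.rpow_neg_one _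

lemma summable_dirichletTerm (hs : 1 < s) (hg : ∀ n, |g n| ≤ 1) :
    Summable (dirichletTerm g s) :=
  (Real.summable_nat_rpow.2 (neg_lt_neg hs)).of_norm_bounded fun n ↦ abs_dirichletTerm_le (hg n)

lemma dirichletTerm_sq_le (hs : 1 < s) {n : ℕ} (hg : |g n| ≤ 1) :
    dirichletTerm g s n ^ 2 ≤ ((n : ℝ) ^ 2)⁻¹ := by
  rw [← sq_abs, ← inv_pow]
  exact pow_le_pow_left₀ (abs_nonneg _) (abs_dirichletTerm_le_inv hs hg) 2

lemma summable_primes_inv_sq : Summable fun p : Nat.Primes ↦ ((p : ℝ) ^ 2)⁻¹ :=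
  (Real.summable_nat_pow_inv.2 one_lt_two).subtype _

lemma exp_tsum_primes_dirichletTerm_le (hg : g.IsMultiplicative)
    (hsupp : ∀ n, ¬ Squarefree n → g n = 0) (hprime : ∀ p : ℕ, p.Prime → |g p| ≤ 1) (hs : 1 < s) :
    Real.exp (∑' p : Nat.Primes, dirichletTerm g s p - 2 * ∑' p : Nat.Primes, ((p : ℝ) ^ 2)⁻¹)
      ≤ ∑' n, dirichletTerm g s n := by
  have hsq (p : Nat.Primes) := dirichletTerm_sq_le hs (hprime p p.2)
  have hsum_sq : Summable fun p : Nat.Primes ↦ dirichletTerm g s p ^ 2 :=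
    summable_primes_inv_sq.of_nonneg_of_le (fun _ ↦ sq_nonneg _) hsq
  have hhalf (p : ℕ) (hp : p.Prime) : -(1 / 2) ≤ dirichletTerm g s p := by
    have hp2 : (p : ℝ)⁻¹ ≤ 2⁻¹ := inv_anti₀ two_pos (by exact_mod_cast hp.two_le)
    linarith [neg_abs_le (dirichletTerm g s p), abs_dirichletTerm_le_inv hs (hprime p hp)]
  have heuler := exp_tsum_primes_le_tsum (isMultiplicative_dirichletTerm hg)
    (fun n hn ↦ by simp [dirichletTerm_apply, hsupp n hn]) hhalf
    (summable_dirichletTerm hs (abs_le_one_of_abs_primes_le_one hg hsupp hprime)) hsum_sq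
  refine le_trans (Real.exp_le_exp.2 ?_) heuler
  linarith [hsum_sq.tsum_le_tsum hsq summable_primes_inv_sq]

lemma mul_tsum_primes_sub_le_tsum_dirichletTerm (hprime : ∀ p : ℕ, p.Prime → |g p| ≤ 1)
    {δ K : ℝ} (hK : ∀ N, ∑ p ∈ Nat.primesBelow (N + 1), (δ - g p) ≤ K) (hs : 1 < s) :
    δ * ∑' p : Nat.Primes, (p : ℝ) ^ (-s) - K ≤ ∑' p : Nat.Primes, dirichletTerm g s p := by
  have hpow : Summable fun p : Nat.Primes ↦ (p : ℝ) ^ (-s) :=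
    Nat.Primes.summable_rpow.2 (neg_lt_neg hs)
  have hterm : Summable fun p : Nat.Primes ↦ dirichletTerm g s p :=
    hpow.of_norm_bounded fun p ↦ abs_dirichletTerm_le (hprime p p.2)
  have hsplit : (fun p : Nat.Primes ↦ (δ - g p) * (p : ℝ) ^ (-s))
      = fun p : Nat.Primes ↦ δ * (p : ℝ) ^ (-s) - dirichletTerm g s p :=
    funext fun _ ↦ sub_mul _ _ _
  have hle := tsum_primes_mul_rpow_neg_le (by linarith) hK
    (hsplit ▸ (hpow.mul_left δ).sub hterm)
  rw [hsplit, (hpow.mul_left δ).tsum_sub hterm, tsum_mul_left] at hle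
  linarith

theorem not_bddAbove_sum_of_bddAbove_sum_primes_sub (hg : g.IsMultiplicative)
    (hsupp : ∀ n, ¬ Squarefree n → g n = 0) (hprime : ∀ p : ℕ, p.Prime → |g p| ≤ 1)
    {δ : ℝ} (hδ : 0 < δ)
    (hbdd : BddAbove (Set.range fun N ↦ ∑ p ∈ Nat.primesBelow (N + 1), (δ - g p))) :
    ¬ BddAbove (Set.range fun N ↦ ∑ n ∈ Finset.Icc 1 N, g n) := by
  rintro ⟨C, hC⟩
  obtain ⟨K, hK⟩ := hbdd
  rw [mem_upperBounds, Set.forall_mem_range] at hC hK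
  set Z := ∑' p : Nat.Primes, ((p : ℝ) ^ 2)⁻¹
  have hbound {s : ℝ} (hs : 1 < s) :
      Real.exp (δ * ∑' p : Nat.Primes, (p : ℝ) ^ (-s) - K - 2 * Z) ≤ C :=
    calc _ ≤ Real.exp (∑' p : Nat.Primes, dirichletTerm g s p - 2 * Z) := by
          gcongr
          exact mul_tsum_primes_sub_le_tsum_dirichletTerm hprime hK hs
      _ ≤ ∑' n, dirichletTerm g s n := exp_tsum_primes_dirichletTerm_le hg hsupp hprime hs
      _ ≤ C := tsum_mul_rpow_neg_le (by linarith) hC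
          (summable_dirichletTerm hs (abs_le_one_of_abs_primes_le_one hg hsupp hprime))
  have hdiv : Tendsto (fun s : ℝ ↦ Real.exp (δ * ∑' p : Nat.Primes, (p : ℝ) ^ (-s) - K - 2 * Z))
      (𝓝[>] 1) atTop :=
    Real.tendsto_exp_atTop.comp <| tendsto_atTop_add_const_right _ _ <|
      tendsto_atTop_add_const_right _ _ <|
        tendsto_tsum_primes_rpow_neg_nhdsGT_one.const_mul_atTop hδ
  obtain ⟨s, hCs, hs⟩ := ((hdiv.eventually_gt_atTop C).and self_mem_nhdsWithin).exists
  exact (hbound hs).not_gt hCs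

end DirichletTerm

section PrimeSums

lemma exists_pos_bddAbove_sum_primes_add {f : ℕ → ℝ} {c : ℝ} (hc : c < 0)
    (hf : ∀ᶠ N : ℕ in atTop, ∑ p ∈ Nat.primesBelow (N + 1), f p ≤ c * (N / Real.log N)) :
    ∃ δ > 0, BddAbove (Set.range fun N ↦ ∑ p ∈ Nat.primesBelow (N + 1), (δ + f p)) := by
  have hlog : 0 < Real.log 4 + 1 := add_pos (Real.log_pos (by norm_num)) one_pos
  -- Chebyshev's bound `π(N) ≤ (log 4 + 1) N / log N` gives `δ π(N) ≤ -c N / log N` for this `δ`.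
  have hδ : 0 < -c / (Real.log 4 + 1) := div_pos (neg_pos.2 hc) hlog
  refine ⟨_, hδ, IsBoundedUnder.bddAbove_range ⟨0, eventually_map.2 ?_⟩⟩
  have hcheb := tendsto_natCast_atTop_atTop.eventually
    (Chebyshev.eventually_primeCounting_le (ε := 1) one_pos)
  filter_upwards [hf, hcheb] with N hN hπ
  rw [Nat.floor_natCast] at hπ
  calc ∑ p ∈ Nat.primesBelow (N + 1), (-c / (Real.log 4 + 1) + f p)
      = -c / (Real.log 4 + 1) * N.primeCounting + ∑ p ∈ Nat.primesBelow (N + 1), f p := by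
        rw [Finset.sum_add_distrib, Finset.sum_const, nsmul_eq_mul, mul_comm,
          Nat.primesBelow_card_eq_primeCounting', Nat.primeCounting]
    _ ≤ -c / (Real.log 4 + 1) * ((Real.log 4 + 1) * N / Real.log N) + c * (N / Real.log N) := by
        gcongr
    _ = 0 := by
        field_simp
        ring

lemma eventually_sum_primes_le_of_isLittleO {f : ℕ → ℝ} {c : ℝ} (hc : c < 0)
    (hf : (fun x : ℝ ↦ ∑ p ∈ Nat.primesBelow (⌊x⌋₊ + 1), f p - c * (x / Real.log x))
      =o[atTop] fun x : ℝ ↦ x / Real.log x) :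
    ∀ᶠ N : ℕ in atTop, ∑ p ∈ Nat.primesBelow (N + 1), f p ≤ c / 2 * (N / Real.log N) := by
  have herror := tendsto_natCast_atTop_atTop.eventually (hf.def (show 0 < -c / 2 by linarith))
  filter_upwards [herror] with N hN
  have hpos : 0 ≤ (N : ℝ) / Real.log N := div_nonneg N.cast_nonneg (Real.log_natCast_nonneg N)
  rw [Real.norm_of_nonneg hpos, Nat.floor_natCast] at hN
  linarith [le_of_abs_le hN]

end PrimeSums

/-- The pointwise product `μ f`. The value `f 0` is irrelevant since `μ 0 = 0`. -/
noncomputable def moebiusTwist (f : ℕ → ℝ) : ArithmeticFunction ℝ :=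
  ⟨fun n ↦ moebius n * f n, by simp⟩

lemma moebiusTwist_apply (f : ℕ → ℝ) (n : ℕ) : moebiusTwist f n = moebius n * f n := rfl

lemma moebiusTwist_apply_prime (f : ℕ → ℝ) {p : ℕ} (hp : p.Prime) : moebiusTwist f p = -f p := by
  simp [moebiusTwist_apply, moebius_apply_prime hp]

lemma isMultiplicative_moebiusTwist {f : ℕ → ℝ} (hf_one : f 1 = 1)
    (hf_mul : ∀ a b : ℕ, a.Coprime b → f (a * b) = f a * f b) :
    (moebiusTwist f).IsMultiplicative := by
  refine ⟨by simp [moebiusTwist_apply, hf_one], fun {m n} hmn ↦ ?_⟩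
  simp only [moebiusTwist_apply, isMultiplicative_moebius.map_mul_of_coprime hmn, hf_mul m n hmn,
    Int.cast_mul]
  ring

theorem stmt_13_general (f : ℕ → ℝ) (hf_one : f 1 = 1)
    (hf_mul : ∀ a b : ℕ, a.Coprime b → f (a * b) = f a * f b)
    (hf_prime : ∀ p : ℕ, p.Prime → |f p| ≤ 1) {c : ℝ} (hc : c < 0)
    (hf_sum : ∀ᶠ N : ℕ in atTop,
      ∑ p ∈ Nat.primesBelow (N + 1), f p ≤ c * (N / Real.log N)) :
    ∀ C : ℝ, ∃ N : ℕ, C < ∑ n ∈ Finset.Icc 1 N, moebius n * f n := by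
  obtain ⟨δ, hδ, hbdd⟩ := exists_pos_bddAbove_sum_primes_add hc hf_sum
  have hsums (N : ℕ) : ∑ p ∈ Nat.primesBelow (N + 1), (δ + f p)
      = ∑ p ∈ Nat.primesBelow (N + 1), (δ - moebiusTwist f p) :=
    Finset.sum_congr rfl fun p hp ↦ by
      rw [moebiusTwist_apply_prime f (Nat.prime_of_mem_primesBelow hp), sub_neg_eq_add]
  simp only [hsums] at hbdd
  have hunbdd := not_bddAbove_sum_of_bddAbove_sum_primes_sub
    (isMultiplicative_moebiusTwist hf_one hf_mul)
    (fun n hn ↦ by simp [moebiusTwist_apply, moebius_eq_zero_of_not_squarefree hn])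
    (fun p hp ↦ by simpa [moebiusTwist_apply_prime f hp] using hf_prime p hp) hδ hbdd
  simpa [not_bddAbove_iff, moebiusTwist_apply] using hunbdd

/-- If `f` is multiplicative with values in `{-1, 1}`, `f (2^k) = 1` for some `k ≥ 1`,
`c ∈ [-1, 0)`, and `∑_{p ≤ x} f p = c·(x/log x)·(1 + o(1))`, then the partial sums of
`μ·f` are unbounded. -/
theorem stmt_13 (f : ℕ → ℤ)
    (hf1 : f 1 = 1)
    (hfmul : ∀ a b : ℕ, Nat.Coprime a b → f (a * b) = f a * f b)
    (hfpm : ∀ n : ℕ, 1 ≤ n → f n = 1 ∨ f n = -1)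
    (hf2 : ∃ k : ℕ, 1 ≤ k ∧ f (2 ^ k) = 1)
    (c : ℝ) (hc : c ∈ Set.Ico (-1 : ℝ) 0)
    (hasymp : (fun x : ℝ => (∑ p ∈ Nat.primesBelow (⌊x⌋₊ + 1), (f p : ℝ))
        - c * (x / Real.log x)) =o[atTop] (fun x : ℝ => x / Real.log x)) :
    ∀ C : ℝ, ∃ N : ℕ,
      C < |((∑ n ∈ Finset.Icc 1 N, ArithmeticFunction.moebius n * f n : ℤ) : ℝ)| := by
  intro C
  obtain ⟨N, hN⟩ := stmt_13_general (fun n ↦ f n) (by simp [hf1])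
    (fun a b hab ↦ by simp [hfmul a b hab])
    (fun p hp ↦ by rcases hfpm p hp.one_le with h | h <;> simp [h])
    (div_neg_of_neg_of_pos hc.2 two_pos) (eventually_sum_primes_le_of_isLittleO hc.2 hasymp)
    C
  exact ⟨N, hN.trans_le (by simpa using le_abs_self _)⟩
end
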